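/- Finite-time existence for kernels of quadratic growth: Let K be a kernel with K(x,y,z) ≤ x̌² y̌² φ(z), which is twice differentiable in its first argument with ∂₁²K(x,y,z) ≤ y̌² φ(z), where φ ∈ Y⁺_{0,2}. Then for any nonzero c₀ ∈ Y⁺_{0,2}, setting T₀ := (2‖φ‖_{0,2}(M₀(c₀) + M₂(c₀)))^{-1}, there exists a weak solution c of CGEDG with kernel K and initial datum c₀ on [0,T₀) taking values in Y⁺_{0,2}, which conserves the zeroth moment (M₀(c_t) = M₀(c₀)) and the first moment (M₁(c_t) = M₁(c₀)) for all t ∈ [0,T₀), and whose second moment satisfies M₂(c_t) ≤ ((M₀(c₀)+M₂(c₀))^{-1} − 2‖φ‖_{0,2} t)^{-1} − M₀(c₀) for all t ∈ [0,T₀). -/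

import Mathlib

open MeasureTheory Set Filter
open scoped ENNReal Topology

noncomputable section

/-- `x̂ := min 1 x` -/
def hatm (x : ℝ) : ℝ := min 1 x

/-- `x̌ := max 1 x` -/
def checkm (x : ℝ) : ℝ := max 1 x

/-- discrete Laplacian `(Δ_z f)(x) = f(x+z) - 2 f(x) + f(x-z)` -/
def dLap (f : ℝ → ℝ) (z x : ℝ) : ℝ := f (x + z) - 2 * f x + f (x - z)

/-- bounded measurable test function -/
def BddMeas (f : ℝ → ℝ) : Prop := Measurable f ∧ ∃ M : ℝ, ∀ x, |f x| ≤ M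

/-- the weighted L¹ norm `‖c‖_{-β,r} = ∫₀^∞ (x^{-β} + x^r) |c x| dx` -/
def Ynorm (β r : ℝ) (c : ℝ → ℝ) : ℝ :=
  ∫ x in Ioi (0:ℝ), (x ^ (-β) + x ^ r) * |c x|

/-- membership in the weighted space `Y_{-β,r}` -/
def MemY (β r : ℝ) (c : ℝ → ℝ) : Prop :=
  Measurable c ∧ IntegrableOn (fun x => (x ^ (-β) + x ^ r) * |c x|) (Ioi (0:ℝ))

/-- membership in the positive cone `Y⁺_{-β,r}` -/
def MemYplus (β r : ℝ) (c : ℝ → ℝ) : Prop :=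
  MemY β r c ∧ ∀ᵐ x ∂(volume.restrict (Ioi (0:ℝ))), 0 ≤ c x

/-- the moment `M_l(c) = ∫₀^∞ x^l c x dx` -/
def Mom (l : ℝ) (c : ℝ → ℝ) : ℝ := ∫ x in Ioi (0:ℝ), x ^ l * c x

/-- finiteness of the `l`-th moment -/
def MomFin (l : ℝ) (c : ℝ → ℝ) : Prop :=
  IntegrableOn (fun x => x ^ l * c x) (Ioi (0:ℝ))

/-- the mixed moment `M_{-α,λ}(c) = ∫₀^∞ x̂^{-α} x̌^λ c x dx` -/
def MomMix (a lam : ℝ) (c : ℝ → ℝ) : ℝ :=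
  ∫ x in Ioi (0:ℝ), hatm x ^ (-a) * checkm x ^ lam * c x

/-- `‖φ‖₀ = ∫₀^∞ φ` -/
def phiNorm0 (φ : ℝ → ℝ) : ℝ := ∫ z in Ioi (0:ℝ), φ z

/-- `‖φ‖_{0,r} = ∫₀^∞ (1 + z^r) φ(z) dz` -/
def phiNorm (r : ℝ) (φ : ℝ → ℝ) : ℝ := ∫ z in Ioi (0:ℝ), (1 + z ^ r) * φ z

/-- a kernel: measurable, nonnegative, symmetric in the first two arguments,
vanishing for `z > x` -/
structure IsKernel (K : ℝ → ℝ → ℝ → ℝ) : Prop where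
  meas : Measurable (fun p : ℝ × ℝ × ℝ => K p.1 p.2.1 p.2.2)
  nonneg : ∀ x y z, 0 ≤ K x y z
  symm : ∀ x y z, K x y z = K y x z
  vanish : ∀ x y z, x < z → K x y z = 0

/-- the domain `D = {(x,y,z) ∈ [0,∞)³ : x ≥ z, y ≥ z}` -/
def Dcgedg : Set (ℝ × ℝ × ℝ) :=
  {p | 0 ≤ p.1 ∧ 0 ≤ p.2.1 ∧ 0 ≤ p.2.2 ∧ p.2.2 ≤ p.1 ∧ p.2.2 ≤ p.2.1}

/-- weak solution of CGEDG with kernel `K`, initial datum `c₀` on `[0,T)`,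
taking values in `Y⁺_{-β,r}`.  Coordinates: `p = (s, x, y, z)`. -/
structure IsWeakSolution (K : ℝ → ℝ → ℝ → ℝ) (β r : ℝ) (T : ℝ≥0∞)
    (c₀ : ℝ → ℝ) (c : ℝ → ℝ → ℝ) : Prop where
  mem : ∀ t : ℝ, 0 ≤ t → ENNReal.ofReal t < T → MemYplus β r (c t)
  cont : ∀ f : ℝ → ℝ, BddMeas f →
    ContinuousOn (fun t => ∫ x in Ioi (0:ℝ), f x * c t x)
      {t : ℝ | 0 ≤ t ∧ ENNReal.ofReal t < T}
  bdd : ∃ C : ℝ, ∀ t : ℝ, 0 ≤ t → ENNReal.ofReal t < T → Ynorm β r (c t) ≤ C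
  integ : ∀ t : ℝ, 0 ≤ t → ENNReal.ofReal t < T →
    IntegrableOn (fun p : ℝ × ℝ × ℝ × ℝ =>
        K p.2.1 p.2.2.1 p.2.2.2 * c p.1 p.2.1 * c p.1 p.2.2.1)
      ((Ioc (0:ℝ) t) ×ˢ Dcgedg)
  weak : ∀ t : ℝ, 0 ≤ t → ENNReal.ofReal t < T → ∀ f : ℝ → ℝ, BddMeas f →
    (∫ x in Ioi (0:ℝ), f x * (c t x - c₀ x)) =
      ∫ p in (Ioc (0:ℝ) t) ×ˢ Dcgedg,
        dLap f p.2.2.2 p.2.1 *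
          (K p.2.1 p.2.2.1 p.2.2.2 * c p.1 p.2.1 * c p.1 p.2.2.1)

/-- the bound on the second derivative of the kernel in its first argument:
`∂₁² K(x,y,z) ≤ ŷ^{-α} y̌^λ φ(z)` for `x ≥ 0` (together with twice
differentiability in the first argument). -/
def SecondDerivBound (K : ℝ → ℝ → ℝ → ℝ) (a lam : ℝ) (φ : ℝ → ℝ) : Prop :=
  ∀ y z, 0 ≤ y → 0 ≤ z → ∀ x, 0 ≤ x →
    DifferentiableWithinAt ℝ (fun w => K w y z) (Ici 0) x ∧
    DifferentiableWithinAt ℝ (derivWithin (fun w => K w y z) (Ici 0)) (Ici 0) x ∧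
    derivWithin (derivWithin (fun w => K w y z) (Ici 0)) (Ici 0) x ≤
      hatm y ^ (-a) * checkm y ^ lam * φ z

/-- the singular bound `(min(1,x-z))^{-α} K(x,y,z) ≤ Cα x̂^{-2α} ŷ^{-α} x̌^λ y̌^λ φ(z)`
for `x ≥ z ≥ 0`. -/
def SingularBound (K : ℝ → ℝ → ℝ → ℝ) (a lam Ca : ℝ) (φ : ℝ → ℝ) : Prop :=
  ∀ x y z, 0 ≤ y → 0 ≤ z → z ≤ x →
    (min 1 (x - z)) ^ (-a) * K x y z ≤
      Ca * hatm x ^ (-(2*a)) * hatm y ^ (-a) * checkm x ^ lam * checkm y ^ lam * φ z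

/-- the global existence assumption (Assumption 1.3) with parameters `μ, ν, α` and
weight `φ`; here `λ = max μ ν`. -/
structure GlobalExistenceAssumption (K : ℝ → ℝ → ℝ → ℝ) (μ ν a : ℝ) (φ : ℝ → ℝ) :
    Prop where
  hμ : μ ∈ Icc (0:ℝ) 2
  hν : ν ∈ Icc (0:ℝ) 2
  hμν : μ + ν ≤ 3
  hlam : 1 < max μ ν
  ha : 0 ≤ a
  hφ : MemYplus (2*a) (2 * max μ ν) φ
  growth : ∀ x y z, 0 ≤ x → 0 ≤ y → 0 ≤ z →
    K x y z ≤ hatm x ^ (-a) * hatm y ^ (-a) *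
      ((checkm x ^ μ * checkm y ^ ν + checkm x ^ ν * checkm y ^ μ) / 2) * φ z
  deriv2 : SecondDerivBound K a (max μ ν) φ
  sing : 0 < a → ∃ Ca > 0, SingularBound K a (max μ ν) Ca φ

/-- the gelation time of a solution on `[0,T)`:
`T_gel = sup { t ∈ [0,T) : M₂(c_t) < ∞ }` (as an extended real). -/
def gelTime (T : ℝ≥0∞) (c : ℝ → ℝ → ℝ) : ℝ≥0∞ :=
  sSup {s : ℝ≥0∞ | ∃ t : ℝ, s = ENNReal.ofReal t ∧ 0 ≤ t ∧
    ENNReal.ofReal t < T ∧ MomFin 2 (c t)}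

/-- the truncated kernel `K_n` -/
def Ktrunc (K : ℝ → ℝ → ℝ → ℝ) (n : ℕ) (x y z : ℝ) : ℝ :=
  if (1/(n:ℝ) < x ∧ x < n) ∧ (1/(n:ℝ) < y ∧ y < n) ∧ (1/(n:ℝ) < z ∧ z < n) ∧
     (0 < x + z ∧ x + z < n) ∧ (0 < y + z ∧ y + z < n) ∧
     1/(n:ℝ) < x - z ∧ 1/(n:ℝ) < y - z
  then K x y z else 0

/-- the right-hand side of the truncated system; coordinates `p = (z, y)`. -/
def truncRHS (K : ℝ → ℝ → ℝ → ℝ) (n : ℕ) (c : ℝ → ℝ) (x : ℝ) : ℝ :=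
  (∫ p in (Ioi (0:ℝ)) ×ˢ (Ioi (0:ℝ)),
      Ktrunc K n p.2 (x - p.1) p.1 * c p.2 * c (x - p.1))
  - (∫ p in (Ioi (0:ℝ)) ×ˢ (Ioi (0:ℝ)),
      Ktrunc K n x p.2 p.1 * c x * c p.2)
  - (∫ p in (Ioi (0:ℝ)) ×ˢ (Ioi (0:ℝ)),
      Ktrunc K n p.2 x p.1 * c p.2 * c x)
  + (∫ p in (Ioi (0:ℝ)) ×ˢ (Ioi (0:ℝ)),
      Ktrunc K n (x + p.1) p.2 p.1 * c (x + p.1) * c p.2)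

/-- classical solution of the truncated system on `L¹((1/n,n))`, extended by zero
outside `(1/n, n)`. -/
structure IsTruncatedSolution (K : ℝ → ℝ → ℝ → ℝ) (n : ℕ) (c : ℝ → ℝ → ℝ) :
    Prop where
  meas : ∀ t : ℝ, Measurable (c t)
  zero_outside : ∀ t : ℝ, ∀ x, x ∉ Ioo (1/(n:ℝ)) (n:ℝ) → c t x = 0
  integrable : ∀ t : ℝ, 0 ≤ t → IntegrableOn (c t) (Ioo (1/(n:ℝ)) (n:ℝ))
  ode : ∀ x ∈ Ioo (1/(n:ℝ)) (n:ℝ), ∀ t : ℝ, 0 ≤ t →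
    HasDerivWithinAt (fun s => c s x) (truncRHS K n (c t) x) (Ici 0) t

/-- de la Vallée-Poussin class `C_VP` -/
structure IsCVP (σ : ℝ → ℝ) : Prop where
  contDiff : ContDiffOn ℝ 2 σ (Ici 0)
  nonneg : ∀ x, 0 ≤ x → 0 ≤ σ x
  convex : ConvexOn ℝ (Ici 0) σ
  zero : σ 0 = 0
  deriv_zero : derivWithin σ (Ici 0) 0 = 0
  deriv_concave : ConcaveOn ℝ (Ici 0) (derivWithin σ (Ici 0))
  deriv_pos : ∀ x, 0 < x → 0 < derivWithin σ (Ici 0) x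
  deriv_top : Tendsto (derivWithin σ (Ici 0)) atTop atTop
  slope_top : Tendsto (fun x => σ x / x) atTop atTop

namespace CG

/-- Lebesgue measure on the positive half line. -/
def zeta : Measure ℝ := volume.restrict (Ioi (0:ℝ))

instance : SFinite zeta := by unfold zeta; infer_instance

/-- the weight `1 + x²` -/
def w (x : ℝ) : ℝ≥0∞ := ENNReal.ofReal (1 + x ^ 2)

lemma w_meas : Measurable w := by unfold w; fun_prop

lemma w_ge_one (x : ℝ) : 1 ≤ w x := by
  unfold w; rw [← ENNReal.ofReal_one]; apply ENNReal.ofReal_le_ofReal; nlinarith [sq_nonneg x]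

lemma w_ne_zero (x : ℝ) : w x ≠ 0 := (lt_of_lt_of_le one_pos (w_ge_one x)).ne'

lemma w_ne_top (x : ℝ) : w x ≠ ∞ := ENNReal.ofReal_ne_top

lemma ae_zeta {p : ℝ → Prop} (h : ∀ z, 0 < z → p z) : ∀ᵐ z ∂zeta, p z := by
  unfold zeta
  filter_upwards [self_mem_ae_restrict measurableSet_Ioi] with z hz using h z hz

/-- one explicit Euler step of the linear equation with rate `k`. -/
def stepM (h : ℝ≥0∞) (k : ℝ × ℝ → ℝ≥0∞) (ρ : Measure ℝ) : Measure ℝ :=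
  ρ.withDensity (fun x => 1 - 2 * h * ∫⁻ z, k (x, z) ∂zeta)
  + h • (((ρ.prod zeta).withDensity k).map (fun p => p.1 + p.2))
  + h • (((ρ.prod zeta).withDensity k).map (fun p => p.1 - p.2))

instance (h : ℝ≥0∞) (k : ℝ × ℝ → ℝ≥0∞) (ρ : Measure ℝ) [SFinite ρ] : SFinite (stepM h k ρ) := by
  unfold stepM; infer_instance

lemma meas_r {k : ℝ × ℝ → ℝ≥0∞} (hk : Measurable k) :
    Measurable (fun x => ∫⁻ z, k (x, z) ∂zeta) := hk.lintegral_prod_right'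

lemma lintegral_stepM (h : ℝ≥0∞) {k : ℝ × ℝ → ℝ≥0∞} (hk : Measurable k) (ρ : Measure ℝ) [SFinite ρ]
    {f : ℝ → ℝ≥0∞} (hf : Measurable f) :
    ∫⁻ x, f x ∂(stepM h k ρ) = ∫⁻ x, ((1 - 2 * h * ∫⁻ z, k (x, z) ∂zeta) * f x
      + h * ∫⁻ z, k (x, z) * (f (x + z) + f (x - z)) ∂zeta) ∂ρ := by
  have hr := meas_r hk
  unfold stepM
  rw [lintegral_add_measure, lintegral_add_measure, lintegral_smul_measure, lintegral_smul_measure,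
    lintegral_map hf (by fun_prop), lintegral_map hf (by fun_prop),
    lintegral_withDensity_eq_lintegral_mul _ (by fun_prop) hf,
    lintegral_withDensity_eq_lintegral_mul _ hk (by fun_prop),
    lintegral_withDensity_eq_lintegral_mul _ hk (by fun_prop),
    lintegral_prod _ (by fun_prop), lintegral_prod _ (by fun_prop)]
  rw [lintegral_add_left (by fun_prop), lintegral_const_mul _ (by
    apply Measurable.lintegral_prod_right' (f := fun p : ℝ × ℝ => k p * (f (p.1 + p.2) + f (p.1 - p.2)))
    fun_prop)]
  rw [add_assoc]
  congr 1
  simp only [smul_eq_mul]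
  rw [← mul_add, ← lintegral_add_left (by
    apply Measurable.lintegral_prod_right' (f := k * fun a : ℝ × ℝ => f (a.1 + a.2))
    fun_prop)]
  congr 1
  apply lintegral_congr; intro x
  rw [← lintegral_add_left (by
    have : Measurable (fun z : ℝ => k (x,z)) := by fun_prop
    simp only [Pi.mul_apply]
    fun_prop)]
  apply lintegral_congr; intro z
  simp [mul_add]

lemma stepM_add (h : ℝ≥0∞) {k : ℝ × ℝ → ℝ≥0∞} (hk : Measurable k) (ρ ρ' : Measure ℝ)
    [SFinite ρ] [SFinite ρ'] : stepM h k (ρ + ρ') = stepM h k ρ + stepM h k ρ' := by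
  ext A hA
  have e : ∀ m : Measure ℝ, m A = ∫⁻ x, A.indicator 1 x ∂m := fun m => by
    rw [lintegral_indicator_one hA]
  rw [Measure.add_apply, e, e (stepM h k ρ), e (stepM h k ρ')]
  have hf : Measurable (A.indicator (1 : ℝ → ℝ≥0∞)) := measurable_one.indicator hA
  rw [lintegral_stepM h hk _ hf, lintegral_stepM h hk _ hf, lintegral_stepM h hk _ hf,
    lintegral_add_measure]

/-- the properties of the rate `k` -/
structure Good (φ : ℝ → ℝ) (N M : ℝ≥0∞) (k : ℝ × ℝ → ℝ≥0∞) : Prop where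
  meas : Measurable k
  vanish : ∀ x z, 0 < z → x < z → k (x, z) = 0
  bd : ∀ x z, 0 < z → k (x, z) ≤ w x * M * ENNReal.ofReal (φ z)
  bdn : ∀ x z, 0 < z → k (x, z) ≤ N * M * ENNReal.ofReal (φ z)
  lap : ∀ x z, 0 < z → k (x + z, z) + k (x - z, z) ≤
    2 * k (x, z) + M * ENNReal.ofReal (z ^ 2 * φ z)

def Phi0 (φ : ℝ → ℝ) : ℝ≥0∞ := ∫⁻ z, ENNReal.ofReal (φ z) ∂zeta
def Phi2 (φ : ℝ → ℝ) : ℝ≥0∞ := ∫⁻ z, ENNReal.ofReal (z ^ 2 * φ z) ∂zeta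

lemma Good.mono {φ : ℝ → ℝ} {N M M' : ℝ≥0∞} {k : ℝ × ℝ → ℝ≥0∞} (hk : Good φ N M k) (h : M ≤ M') :
    Good φ N M' k where
  meas := hk.meas
  vanish := hk.vanish
  bd x z hz := (hk.bd x z hz).trans (by gcongr)
  bdn x z hz := (hk.bdn x z hz).trans (by gcongr)
  lap x z hz := (hk.lap x z hz).trans (by gcongr)

section
variable {φ : ℝ → ℝ} {N M h : ℝ≥0∞} {k : ℝ × ℝ → ℝ≥0∞}

lemma Good.rate (hφ : Measurable φ) (hk : Good φ N M k) (hh : 2 * h * (N * M * Phi0 φ) ≤ 1) (x : ℝ) :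
    2 * h * ∫⁻ z, k (x, z) ∂zeta ≤ 1 := by
  refine le_trans ?_ hh
  gcongr
  unfold Phi0
  rw [← lintegral_const_mul _ (by fun_prop)]
  exact lintegral_mono_ae (ae_zeta fun z hz => hk.bdn x z hz)

lemma Good.rate_bd (hφ : Measurable φ) (hk : Good φ N M k) (x : ℝ) :
    ∫⁻ z, k (x, z) ∂zeta ≤ w x * M * Phi0 φ := by
  unfold Phi0
  rw [← lintegral_const_mul _ (by fun_prop)]
  exact lintegral_mono_ae (ae_zeta fun z hz => hk.bd x z hz)

/-- weak form of one step -/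
lemma step_weak (hφ : Measurable φ) (hk : Good φ N M k) (hh : 2 * h * (N * M * Phi0 φ) ≤ 1)
    (ρ : Measure ℝ) [SFinite ρ] {f : ℝ → ℝ≥0∞} (hf : Measurable f) :
    ∫⁻ x, f x ∂(stepM h k ρ) + h * ∫⁻ x, ∫⁻ z, k (x, z) * (2 * f x) ∂zeta ∂ρ
     = ∫⁻ x, f x ∂ρ + h * ∫⁻ x, ∫⁻ z, k (x, z) * (f (x + z) + f (x - z)) ∂zeta ∂ρ := by
  have hkm := hk.meas
  have hr := meas_r hk.meas
  rw [lintegral_stepM h hk.meas ρ hf]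
  have m1 : Measurable (fun x => ∫⁻ z, k (x, z) * (2 * f x) ∂zeta) :=
    Measurable.lintegral_prod_right' (f := fun p : ℝ × ℝ => k p * (2 * f p.1)) (by fun_prop)
  have m2 : Measurable (fun x => ∫⁻ z, k (x, z) * (f (x + z) + f (x - z)) ∂zeta) :=
    Measurable.lintegral_prod_right'
      (f := fun p : ℝ × ℝ => k p * (f (p.1 + p.2) + f (p.1 - p.2))) (by fun_prop)
  rw [← lintegral_const_mul _ m1, ← lintegral_const_mul _ m2, ← lintegral_add_right _ (by fun_prop),
    ← lintegral_add_right _ (by fun_prop)]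
  apply lintegral_congr; intro x
  rw [add_right_comm]
  congr 1
  have hx : ∫⁻ z, k (x, z) * (2 * f x) ∂zeta = (∫⁻ z, k (x, z) ∂zeta) * (2 * f x) :=
    lintegral_mul_const _ (by fun_prop)
  rw [hx]
  calc _ = ((1 - 2 * h * ∫⁻ z, k (x, z) ∂zeta) + 2 * h * ∫⁻ z, k (x, z) ∂zeta) * f x := by ring
    _ = f x := by rw [tsub_add_cancel_of_le (hk.rate hφ hh x), one_mul]

/-- moments -/
lemma step_moment (hφ : Measurable φ) (hk : Good φ N M k) (hh : 2 * h * (N * M * Phi0 φ) ≤ 1)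
    (ρ : Measure ℝ) [SFinite ρ] {f : ℝ → ℝ≥0∞} (hf : Measurable f) {g : ℝ → ℝ → ℝ≥0∞} {C : ℝ≥0∞}
    (h1 : ∀ x z, 0 < z → z ≤ x → f (x + z) + f (x - z) ≤ 2 * f x + g x z)
    (h2 : ∀ x z, 0 < z → z ≤ x → w x * g x z ≤ C * ENNReal.ofReal (z ^ 2) * f x) :
    ∫⁻ x, f x ∂(stepM h k ρ) ≤ (1 + h * (C * M * Phi2 φ)) * ∫⁻ x, f x ∂ρ := by
  have hkm := hk.meas
  rw [lintegral_stepM h hk.meas ρ hf, ← lintegral_const_mul _ hf]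
  apply lintegral_mono; intro x
  dsimp only
  have : ∫⁻ z, k (x, z) * (f (x + z) + f (x - z)) ∂zeta ≤
      (∫⁻ z, k (x, z) ∂zeta) * (2 * f x) + (C * M * Phi2 φ) * f x := by
    have e2 : (C * M * Phi2 φ) * f x =
        ∫⁻ z, (C * M * ENNReal.ofReal (z ^ 2 * φ z)) * f x ∂zeta := by
      unfold Phi2
      rw [lintegral_mul_const _ (by fun_prop), lintegral_const_mul _ (by fun_prop)]
    rw [e2, ← lintegral_mul_const _ (by fun_prop), ← lintegral_add_right _ (by fun_prop)]
    apply lintegral_mono_ae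
    refine ae_zeta fun z hz => ?_
    rcases lt_or_ge x z with hxz | hxz
    · rw [hk.vanish x z hz hxz]; simp
    · calc k (x, z) * (f (x + z) + f (x - z)) ≤ k (x,z) * (2 * f x + g x z) := by
            exact mul_le_mul_right (h1 x z hz hxz) _
        _ = k (x,z) * (2 * f x) + k (x, z) * g x z := by ring
        _ ≤ k (x,z) * (2 * f x) + (w x * M * ENNReal.ofReal (φ z)) * g x z := by
            gcongr; exact hk.bd x z hz
        _ = k (x,z) * (2 * f x) + M * ENNReal.ofReal (φ z) * (w x * g x z) := by ring
        _ ≤ k (x,z) * (2 * f x) + M * ENNReal.ofReal (φ z) * (C * ENNReal.ofReal (z ^ 2) * f x) := by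
            exact add_le_add_right (mul_le_mul_right (h2 x z hz hxz) _) _
        _ = _ := by rw [ENNReal.ofReal_mul (by positivity)]; ring
  calc _ ≤ (1 - 2 * h * ∫⁻ z, k (x, z) ∂zeta) * f x
      + h * ((∫⁻ z, k (x, z) ∂zeta) * (2 * f x) + (C * M * Phi2 φ) * f x) := by gcongr
    _ = ((1 - 2 * h * ∫⁻ z, k (x, z) ∂zeta) + 2 * h * ∫⁻ z, k (x, z) ∂zeta) * f x
        + h * (C * M * Phi2 φ) * f x := by ring
    _ = _ := by rw [tsub_add_cancel_of_le (hk.rate hφ hh x)]; ring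

/-- exact conservation -/
lemma step_cons (hφ : Measurable φ) (hk : Good φ N M k) (hh : 2 * h * (N * M * Phi0 φ) ≤ 1)
    (ρ : Measure ℝ) [SFinite ρ] {f : ℝ → ℝ≥0∞} (hf : Measurable f)
    (h1 : ∀ x z, 0 < z → z ≤ x → f (x + z) + f (x - z) = 2 * f x) :
    ∫⁻ x, f x ∂(stepM h k ρ) = ∫⁻ x, f x ∂ρ := by
  have hkm := hk.meas
  rw [lintegral_stepM h hk.meas ρ hf]
  apply lintegral_congr; intro x
  have : ∫⁻ z, k (x, z) * (f (x + z) + f (x - z)) ∂zeta = (∫⁻ z, k (x, z) ∂zeta) * (2 * f x) := by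
    rw [← lintegral_mul_const _ (by fun_prop)]
    apply lintegral_congr_ae
    refine ae_zeta fun z hz => ?_
    rcases lt_or_ge x z with hxz | hxz
    · dsimp only; rw [hk.vanish x z hz hxz]; simp
    · dsimp only; rw [h1 x z hz hxz]
  rw [this]
  calc _ = ((1 - 2 * h * ∫⁻ z, k (x, z) ∂zeta) + 2 * h * ∫⁻ z, k (x, z) ∂zeta) * f x := by ring
    _ = f x := by rw [tsub_add_cancel_of_le (hk.rate hφ hh x), one_mul]

lemma step_supp (hφ : Measurable φ) (hk : Good φ N M k) (hh : 2 * h * (N * M * Phi0 φ) ≤ 1)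
    (ρ : Measure ℝ) [SFinite ρ] (h0 : ρ (Iio 0) = 0) : stepM h k ρ (Iio 0) = 0 := by
  have e : ∀ m : Measure ℝ, m (Iio 0) = ∫⁻ x, (Iio (0:ℝ)).indicator 1 x ∂m := fun m => by
    rw [lintegral_indicator_one measurableSet_Iio]
  rw [e, step_cons hφ hk hh ρ (measurable_one.indicator measurableSet_Iio), ← e, h0]
  intro x z hz hxz
  have a1 : ¬ (x + z < 0) := by linarith
  have a2 : ¬ (x - z < 0) := by linarith
  have a3 : ¬ (x < 0) := by linarith
  simp [indicator, a2, a3, not_lt.2 (by linarith : 0 ≤ x + z)]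

/-- bounded densities stay bounded -/
lemma step_vol (hφ : Measurable φ) (hk : Good φ N M k) (hh : 2 * h * (N * M * Phi0 φ) ≤ 1)
    (ρ : Measure ℝ) [SFinite ρ] (L : ℝ≥0∞) (h0 : ρ ≤ L • volume) :
    stepM h k ρ ≤ ((1 + h * (M * Phi2 φ)) * L) • volume := by
  have hkm := hk.meas
  rw [Measure.le_iff]
  intro A hA
  have e : ∀ m : Measure ℝ, m A = ∫⁻ x, A.indicator 1 x ∂m := fun m => by
    rw [lintegral_indicator_one hA]
  set f : ℝ → ℝ≥0∞ := A.indicator 1 with hfdef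
  have hf : Measurable f := measurable_one.indicator hA
  rw [e, lintegral_stepM h hk.meas ρ hf]
  have hr := meas_r hk.meas
  refine (lintegral_mono' h0 le_rfl).trans ?_
  rw [lintegral_smul_measure, Measure.smul_apply, smul_eq_mul, smul_eq_mul, mul_comm _ L, mul_assoc]
  gcongr
  have m2 : Measurable (fun x => ∫⁻ z, k (x, z) * (f (x + z) + f (x - z)) ∂zeta) :=
    Measurable.lintegral_prod_right'
      (f := fun p : ℝ × ℝ => k p * (f (p.1 + p.2) + f (p.1 - p.2))) (by fun_prop)
  have m3 : Measurable (fun x => ∫⁻ z, (k (x - z, z) + k (x + z, z)) ∂zeta) :=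
    Measurable.lintegral_prod_right'
      (f := fun p : ℝ × ℝ => k (p.1 - p.2, p.2) + k (p.1 + p.2, p.2)) (by fun_prop)
  rw [lintegral_add_right _ (by fun_prop), lintegral_const_mul _ m2]
  have key : ∫⁻ x, ∫⁻ z, k (x, z) * (f (x + z) + f (x - z)) ∂zeta =
      ∫⁻ x, (∫⁻ z, (k (x - z, z) + k (x + z, z)) ∂zeta) * f x := by
    rw [lintegral_lintegral_swap (by unfold Function.uncurry; fun_prop)]
    have : ∀ x, (∫⁻ z, (k (x - z, z) + k (x + z, z)) ∂zeta) * f x =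
       ∫⁻ z, (k (x - z, z) + k (x + z, z)) * f x ∂zeta := fun x =>
       (lintegral_mul_const _ (by fun_prop)).symm
    simp_rw [this]
    rw [lintegral_lintegral_swap (f := fun x z => (k (x - z, z) + k (x + z, z)) * f x)
      (by unfold Function.uncurry; fun_prop)]
    apply lintegral_congr; intro z
    simp_rw [mul_add, add_mul]
    rw [lintegral_add_left (by fun_prop), lintegral_add_left (by fun_prop)]
    congr 1
    · rw [← lintegral_sub_right_eq_self (fun x => k (x, z) * f (x + z)) z]; simp
    · rw [← lintegral_add_right_eq_self (fun x => k (x, z) * f (x - z)) z]; simp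
  rw [key, ← lintegral_const_mul _ (by fun_prop), ← lintegral_add_right _ (by fun_prop), e,
    ← lintegral_const_mul _ hf]
  apply lintegral_mono; intro x
  dsimp only
  have b : (∫⁻ z, (k (x - z, z) + k (x + z, z)) ∂zeta) ≤ 2 * (∫⁻ z, k (x, z) ∂zeta) + M * Phi2 φ := by
    unfold Phi2
    rw [← lintegral_const_mul _ (by fun_prop), ← lintegral_const_mul _ (by fun_prop),
      ← lintegral_add_right _ (by fun_prop)]
    refine lintegral_mono_ae (ae_zeta fun z hz => ?_)
    rw [add_comm]; exact hk.lap x z hz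
  calc _ ≤ (1 - 2 * h * ∫⁻ z, k (x, z) ∂zeta) * f x
      + h * ((2 * (∫⁻ z, k (x, z) ∂zeta) + M * Phi2 φ) * f x) := by gcongr
    _ = ((1 - 2 * h * ∫⁻ z, k (x, z) ∂zeta) + 2 * h * ∫⁻ z, k (x, z) ∂zeta) * f x
        + h * (M * Phi2 φ) * f x := by ring
    _ = _ := by rw [tsub_add_cancel_of_le (hk.rate hφ hh x)]; ring

end
end CG

namespace CG

structure Hyp (K : ℝ → ℝ → ℝ → ℝ) (φ : ℝ → ℝ) : Prop where
  Kmeas : Measurable (fun p : ℝ × ℝ × ℝ => K p.1 p.2.1 p.2.2)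
  φmeas : Measurable φ
  K0 : ∀ x y z, 0 ≤ K x y z
  van1 : ∀ x y z, x < z → K x y z = 0
  van2 : ∀ x y z, y < z → K x y z = 0
  φ0 : ∀ z, 0 < z → 0 ≤ φ z
  bd : ∀ x y z, 0 < z → K x y z ≤ (1 + x ^ 2) * (1 + y ^ 2) * φ z
  lap : ∀ x y z, 0 < z → K (x + z) y z + K (x - z) y z ≤ 2 * K x y z + (1 + y ^ 2) * (z ^ 2 * φ z)

lemma checkm_sq_le (x : ℝ) : checkm x ^ (2:ℝ) ≤ 1 + x ^ 2 := by
  unfold checkm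
  rw [Real.rpow_two]
  rcases max_cases (1:ℝ) x with ⟨h, _⟩ | ⟨h, _⟩ <;> rw [h] <;> nlinarith [sq_nonneg x]

lemma checkm_sq_pos (x : ℝ) : 0 < checkm x ^ (2:ℝ) := by
  unfold checkm
  apply Real.rpow_pos_of_pos
  exact lt_of_lt_of_le one_pos (le_max_left _ _)

lemma lap_of_deriv {k : ℝ → ℝ} {B : ℝ}
    (hd : ∀ x, 0 ≤ x → DifferentiableWithinAt ℝ k (Ici 0) x ∧
      DifferentiableWithinAt ℝ (derivWithin k (Ici 0)) (Ici 0) x ∧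
      derivWithin (derivWithin k (Ici 0)) (Ici 0) x ≤ B)
    {x z : ℝ} (hz : 0 ≤ z) (hxz : z ≤ x) : k (x + z) + k (x - z) ≤ 2 * k x + B * z ^ 2 := by
  set g : ℝ → ℝ := fun x => k x - B / 2 * x ^ 2
  have hc : ConcaveOn ℝ (Ici (0:ℝ)) g := by
    refine concaveOn_of_hasDerivWithinAt2_nonpos (f' := fun x => derivWithin k (Ici 0) x - B * x)
      (f'' := fun x => derivWithin (derivWithin k (Ici 0)) (Ici 0) x - B) (convex_Ici 0) ?_ ?_ ?_ ?_
    · intro x hx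
      exact ((hd x hx).1.continuousWithinAt).sub (by fun_prop)
    · intro x hx
      rw [interior_Ici] at hx
      have h1 := ((hd x (le_of_lt hx)).1.hasDerivWithinAt).mono (interior_subset (s := Ici (0:ℝ)))
      have h2 : HasDerivAt (fun x : ℝ => B / 2 * x ^ 2) (B * x) x := by
        have := (hasDerivAt_pow 2 x).const_mul (B / 2)
        exact this.congr_deriv (by norm_num; ring)
      exact h1.sub h2.hasDerivWithinAt
    · intro x hx
      rw [interior_Ici] at hx
      have h1 := ((hd x (le_of_lt hx)).2.1.hasDerivWithinAt).mono (interior_subset (s := Ici (0:ℝ)))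
      have h2 : HasDerivAt (fun x : ℝ => B * x) B x := by
        simpa using (hasDerivAt_id x).const_mul B
      exact h1.sub h2.hasDerivWithinAt
    · intro x hx
      rw [interior_Ici] at hx
      linarith [(hd x (le_of_lt hx)).2.2]
  have h := hc.2 (show x + z ∈ Ici (0:ℝ) by simp only [mem_Ici]; linarith)
    (show x - z ∈ Ici (0:ℝ) by simp only [mem_Ici]; linarith)
    (show (0:ℝ) ≤ 1/2 by norm_num) (show (0:ℝ) ≤ 1/2 by norm_num) (by norm_num)
  simp only [smul_eq_mul, g] at h
  have e : 1 / 2 * (x + z) + 1 / 2 * (x - z) = x := by ring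
  rw [e] at h
  nlinarith

lemma mkHyp (K : ℝ → ℝ → ℝ → ℝ) (φ : ℝ → ℝ) (hK : IsKernel K)
    (hφ : MemYplus 0 2 φ)
    (hbound : ∀ x y z : ℝ, 0 ≤ x → 0 ≤ y → 0 ≤ z →
      K x y z ≤ checkm x ^ (2:ℝ) * checkm y ^ (2:ℝ) * φ z)
    (hderiv : SecondDerivBound K 0 2 φ) : Hyp K φ := by
  have φ0 : ∀ z, 0 ≤ z → 0 ≤ φ z := by
    intro z hz
    have h1 := (hK.nonneg 0 0 z).trans (hbound 0 0 z le_rfl le_rfl hz)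
    exact nonneg_of_mul_nonneg_right h1 (mul_pos (checkm_sq_pos 0) (checkm_sq_pos 0))
  have van2 : ∀ x y z, y < z → K x y z = 0 := fun x y z h => by
    rw [hK.symm]; exact hK.vanish _ _ _ h
  refine ⟨hK.meas, hφ.1.1, hK.nonneg, hK.vanish, van2, fun z hz => φ0 z hz.le, ?_, ?_⟩
  · intro x y z hz
    have := φ0 z hz.le
    rcases lt_or_ge x 0 with hx | hx
    · rw [hK.vanish x y z (by linarith)]; positivity
    rcases lt_or_ge y 0 with hy | hy
    · rw [van2 x y z (by linarith)]; positivity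
    refine (hbound x y z hx hy hz.le).trans ?_
    have := checkm_sq_le x
    have := checkm_sq_le y
    have := (checkm_sq_pos x).le
    have := (checkm_sq_pos y).le
    gcongr
  · intro x y z hz
    have hφz := φ0 z hz.le
    rcases lt_or_ge y 0 with hy | hy
    · rw [van2 _ y z (by linarith), van2 _ y z (by linarith), van2 _ y z (by linarith)]
      have : 0 ≤ (1 + y ^ 2) * (z ^ 2 * φ z) := by positivity
      linarith
    rcases lt_or_ge x 0 with hx | hx
    · rw [hK.vanish _ y z (by linarith), hK.vanish _ y z (by linarith), hK.vanish _ y z (by linarith)]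
      have : 0 ≤ (1 + y ^ 2) * (z ^ 2 * φ z) := by positivity
      linarith
    set B := checkm y ^ (2:ℝ) * φ z
    have hd : ∀ x, 0 ≤ x → DifferentiableWithinAt ℝ (fun w => K w y z) (Ici 0) x ∧
      DifferentiableWithinAt ℝ (derivWithin (fun w => K w y z) (Ici 0)) (Ici 0) x ∧
      derivWithin (derivWithin (fun w => K w y z) (Ici 0)) (Ici 0) x ≤ B := by
      intro x hx
      obtain ⟨a, b, c⟩ := hderiv y z hy hz.le x hx
      refine ⟨a, b, c.trans ?_⟩
      simp [B]
    have hB : 0 ≤ B := mul_nonneg (checkm_sq_pos y).le hφz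
    have hB2 : B * z ^ 2 ≤ (1 + y ^ 2) * (z ^ 2 * φ z) := by
      have := checkm_sq_le y
      calc B * z ^ 2 ≤ ((1 + y ^ 2) * φ z) * z ^ 2 := by simp only [B]; gcongr
        _ = _ := by ring
    rcases le_or_gt z x with hxz | hxz
    · have := lap_of_deriv hd hz.le hxz
      linarith
    · -- 0 ≤ x < z
      have hKz : K z y z = 0 := by
        have hcont : ContinuousWithinAt (fun w => K w y z) (Ici 0) z := (hd z hz.le).1.continuousWithinAt
        have hcont' : ContinuousAt (fun w => K w y z) z := hcont.continuousAt (Ici_mem_nhds hz)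
        have h1 : Tendsto (fun w => K w y z) (𝓝[<] z) (𝓝 (K z y z)) :=
          hcont'.tendsto.mono_left nhdsWithin_le_nhds
        have h2 : Tendsto (fun w => K w y z) (𝓝[<] z) (𝓝 0) := by
          apply tendsto_const_nhds.congr'
          filter_upwards [self_mem_nhdsWithin] with w hw
          exact (hK.vanish w y z hw).symm
        exact tendsto_nhds_unique h1 h2
      have := lap_of_deriv hd hx hxz.le
      simp only [hKz] at this
      have h3 := hK.nonneg (z - x) y z
      rw [hK.vanish x y z hxz, hK.vanish (x - z) y z (by linarith), add_comm x z]
      have : B * x ^ 2 ≤ B * z ^ 2 := by gcongr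
      linarith

/-- truncated kernel -/
def KnE (K : ℝ → ℝ → ℝ → ℝ) (φ : ℝ → ℝ) (N : ℝ) (x y z : ℝ) : ℝ≥0∞ :=
  ENNReal.ofReal (min (K x y z) (N * (1 + y ^ 2) * φ z))

def rateK (K : ℝ → ℝ → ℝ → ℝ) (φ : ℝ → ℝ) (N : ℝ) (μ : Measure ℝ) (p : ℝ × ℝ) : ℝ≥0∞ :=
  ∫⁻ y, KnE K φ N p.1 y p.2 ∂μ

lemma KnE_meas {K : ℝ → ℝ → ℝ → ℝ} {φ : ℝ → ℝ} (H : Hyp K φ) (N : ℝ) :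
    Measurable (fun p : ℝ × ℝ × ℝ => KnE K φ N p.1 p.2.1 p.2.2) := by
  have h1 := H.Kmeas
  have h2 := H.φmeas
  unfold KnE
  fun_prop

lemma KnE_le {K : ℝ → ℝ → ℝ → ℝ} {φ : ℝ → ℝ} (N x y z : ℝ) :
    KnE K φ N x y z ≤ ENNReal.ofReal (K x y z) :=
  ENNReal.ofReal_le_ofReal (min_le_left _ _)

lemma K_le {K : ℝ → ℝ → ℝ → ℝ} {φ : ℝ → ℝ} (H : Hyp K φ) (x y : ℝ) {z : ℝ} (hz : 0 < z) :
    ENNReal.ofReal (K x y z) ≤ w x * w y * ENNReal.ofReal (φ z) := by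
  unfold w
  rw [← ENNReal.ofReal_mul (by positivity), ← ENNReal.ofReal_mul (by positivity)]
  exact ENNReal.ofReal_le_ofReal (H.bd x y z hz)

lemma KnE_eq {K : ℝ → ℝ → ℝ → ℝ} {φ : ℝ → ℝ} (H : Hyp K φ) {N x y z : ℝ} (hz : 0 < z)
    (hx : 1 + x ^ 2 ≤ N) : KnE K φ N x y z = ENNReal.ofReal (K x y z) := by
  unfold KnE
  rw [min_eq_left]
  refine (H.bd x y z hz).trans ?_
  have := H.φ0 z hz
  gcongr

lemma good_rateK {K : ℝ → ℝ → ℝ → ℝ} {φ : ℝ → ℝ} (H : Hyp K φ) {N : ℝ} (hN : 0 ≤ N)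
    (μ : Measure ℝ) [SFinite μ] :
    Good φ (ENNReal.ofReal N) (∫⁻ x, w x ∂μ) (rateK K φ N μ) := by
  have hm := KnE_meas H N
  have hwm := w_meas
  refine ⟨?_, ?_, ?_, ?_, ?_⟩
  · unfold rateK
    exact Measurable.lintegral_prod_right'
      (f := fun q : (ℝ × ℝ) × ℝ => KnE K φ N q.1.1 q.2 q.1.2)
      (hm.comp (f := fun q : (ℝ × ℝ) × ℝ => (q.1.1, q.2, q.1.2)) (by fun_prop))
  · intro x z hz hxz
    unfold rateK
    have : ∀ y, KnE K φ N x y z = 0 := fun y => by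
      have := KnE_le (K := K) (φ := φ) N x y z
      rw [H.van1 x y z hxz] at this; simpa using this
    simp [this]
  · intro x z hz
    unfold rateK
    calc _ ≤ ∫⁻ y, w x * ENNReal.ofReal (φ z) * w y ∂μ := by
          apply lintegral_mono; intro y
          exact (KnE_le N x y z).trans ((K_le H x y hz).trans_eq (by ring))
      _ = _ := by rw [lintegral_const_mul _ hwm]; ring
  · intro x z hz
    unfold rateK
    calc _ ≤ ∫⁻ y, ENNReal.ofReal N * ENNReal.ofReal (φ z) * w y ∂μ := by
          apply lintegral_mono; intro y
          unfold KnE w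
          dsimp only
          rw [← ENNReal.ofReal_mul hN, ← ENNReal.ofReal_mul (mul_nonneg hN (H.φ0 z hz))]
          exact ENNReal.ofReal_le_ofReal ((min_le_right _ _).trans_eq (by ring))
      _ = _ := by rw [lintegral_const_mul _ hwm]; ring
  · intro x z hz
    unfold rateK
    have m1 : ∀ x, Measurable (fun y => KnE K φ N x y z) := fun x =>
      hm.comp (f := fun y : ℝ => (x, y, z)) (by fun_prop)
    rw [← lintegral_add_left (m1 _), ← lintegral_const_mul _ (m1 _),
      ← lintegral_mul_const _ hwm, ← lintegral_add_left ((m1 _).const_mul _)]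
    apply lintegral_mono; intro y
    dsimp only
    unfold KnE w
    have hφz := H.φ0 z hz
    have ha : 0 ≤ N * (1 + y ^ 2) * φ z := by positivity
    have h0 : ∀ x, 0 ≤ min (K x y z) (N * (1 + y ^ 2) * φ z) := fun x => le_min (H.K0 x y z) ha
    rw [← ENNReal.ofReal_add (h0 _) (h0 _), show (2:ℝ≥0∞) = ENNReal.ofReal 2 by simp,
      ← ENNReal.ofReal_mul (by norm_num), ← ENNReal.ofReal_mul (by positivity),
      ← ENNReal.ofReal_add (mul_nonneg (by norm_num) (h0 _)) (by positivity)]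
    apply ENNReal.ofReal_le_ofReal
    have hl := H.lap x y z hz
    have i1 := min_le_left (K (x+z) y z) (N * (1 + y ^ 2) * φ z)
    have i2 := min_le_right (K (x+z) y z) (N * (1 + y ^ 2) * φ z)
    have i3 := min_le_left (K (x-z) y z) (N * (1 + y ^ 2) * φ z)
    have i4 := min_le_right (K (x-z) y z) (N * (1 + y ^ 2) * φ z)
    have i5 : 0 ≤ (1 + y ^ 2) * (z ^ 2 * φ z) := by positivity
    rcases min_cases (K x y z) (N * (1 + y ^ 2) * φ z) with ⟨h, _⟩ | ⟨h, _⟩ <;> rw [h] <;> linarith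

end CG

namespace CG

/-- linear Euler scheme with given rates -/
def lin (h : ℝ≥0∞) (k : ℕ → ℝ × ℝ → ℝ≥0∞) (ρ : Measure ℝ) : ℕ → Measure ℝ
  | 0 => ρ
  | j + 1 => stepM h (k j) (lin h k ρ j)

instance lin_sfinite (h : ℝ≥0∞) (k : ℕ → ℝ × ℝ → ℝ≥0∞) (ρ : Measure ℝ) [SFinite ρ] (j : ℕ) :
    SFinite (lin h k ρ j) := by
  induction j with
  | zero => unfold lin; infer_instance
  | succ j ih => unfold lin; infer_instance

/-- nonlinear Euler scheme -/
def euler (K : ℝ → ℝ → ℝ → ℝ) (φ : ℝ → ℝ) (N : ℝ) (h : ℝ≥0∞) (ρ : Measure ℝ) : ℕ → Measure ℝ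
  | 0 => ρ
  | j + 1 => stepM h (rateK K φ N (euler K φ N h ρ j)) (euler K φ N h ρ j)

instance euler_sfinite (K : ℝ → ℝ → ℝ → ℝ) (φ : ℝ → ℝ) (N : ℝ) (h : ℝ≥0∞) (ρ : Measure ℝ)
    [SFinite ρ] (j : ℕ) : SFinite (euler K φ N h ρ j) := by
  induction j with
  | zero => unfold euler; infer_instance
  | succ j ih => unfold euler; infer_instance

lemma euler_eq_lin (K : ℝ → ℝ → ℝ → ℝ) (φ : ℝ → ℝ) (N : ℝ) (h : ℝ≥0∞) (ρ : Measure ℝ) (j : ℕ) :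
    euler K φ N h ρ j = lin h (fun i => rateK K φ N (euler K φ N h ρ i)) ρ j := by
  induction j with
  | zero => rfl
  | succ j ih =>
    show stepM h (rateK K φ N (euler K φ N h ρ j)) (euler K φ N h ρ j) =
      stepM h (rateK K φ N (euler K φ N h ρ j)) (lin h _ ρ j)
    rw [← ih]

section lin
variable {φ : ℝ → ℝ} {N M h : ℝ≥0∞} {k : ℕ → ℝ × ℝ → ℝ≥0∞} {J : ℕ}

lemma lin_add (hk : ∀ j < J, Good φ N M (k j)) (ρ ρ' : Measure ℝ) [SFinite ρ] [SFinite ρ'] :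
    ∀ j ≤ J, lin h k (ρ + ρ') j = lin h k ρ j + lin h k ρ' j := by
  intro j
  induction j with
  | zero => intro _; rfl
  | succ j ih =>
    intro hj
    simp only [lin]
    rw [ih (by omega), stepM_add h (hk j (by omega)).meas]

lemma lin_moment (hφ : Measurable φ) (hh : 2 * h * (N * M * Phi0 φ) ≤ 1)
    (hk : ∀ j < J, Good φ N M (k j)) (ρ : Measure ℝ) [SFinite ρ]
    {f : ℝ → ℝ≥0∞} (hf : Measurable f) {g : ℝ → ℝ → ℝ≥0∞} {C : ℝ≥0∞}
    (h1 : ∀ x z, 0 < z → z ≤ x → f (x + z) + f (x - z) ≤ 2 * f x + g x z)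
    (h2 : ∀ x z, 0 < z → z ≤ x → w x * g x z ≤ C * ENNReal.ofReal (z ^ 2) * f x) :
    ∀ j ≤ J, ∫⁻ x, f x ∂(lin h k ρ j) ≤ (1 + h * (C * M * Phi2 φ)) ^ j * ∫⁻ x, f x ∂ρ := by
  intro j
  induction j with
  | zero => intro _; simp [lin]
  | succ j ih =>
    intro hj
    simp only [lin]
    refine (step_moment hφ (hk j (by omega)) hh _ hf h1 h2).trans ?_
    refine (mul_le_mul_right (ih (by omega)) _).trans_eq ?_
    rw [pow_succ']; ring

lemma lin_cons (hφ : Measurable φ) (hh : 2 * h * (N * M * Phi0 φ) ≤ 1)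
    (hk : ∀ j < J, Good φ N M (k j)) (ρ : Measure ℝ) [SFinite ρ]
    {f : ℝ → ℝ≥0∞} (hf : Measurable f)
    (h1 : ∀ x z, 0 < z → z ≤ x → f (x + z) + f (x - z) = 2 * f x) :
    ∀ j ≤ J, ∫⁻ x, f x ∂(lin h k ρ j) = ∫⁻ x, f x ∂ρ := by
  intro j
  induction j with
  | zero => intro _; simp [lin]
  | succ j ih =>
    intro hj
    simp only [lin]
    rw [step_cons hφ (hk j (by omega)) hh _ hf h1]
    exact ih (by omega)

lemma lin_supp (hφ : Measurable φ) (hh : 2 * h * (N * M * Phi0 φ) ≤ 1)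
    (hk : ∀ j < J, Good φ N M (k j)) (ρ : Measure ℝ) [SFinite ρ] (h0 : ρ (Iio 0) = 0) :
    ∀ j ≤ J, lin h k ρ j (Iio 0) = 0 := by
  intro j
  induction j with
  | zero => intro _; simpa [lin]
  | succ j ih =>
    intro hj
    simp only [lin]
    exact step_supp hφ (hk j (by omega)) hh _ (ih (by omega))

lemma lin_vol (hφ : Measurable φ) (hh : 2 * h * (N * M * Phi0 φ) ≤ 1)
    (hk : ∀ j < J, Good φ N M (k j)) (ρ : Measure ℝ) [SFinite ρ] (L : ℝ≥0∞) (h0 : ρ ≤ L • volume) :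
    ∀ j ≤ J, lin h k ρ j ≤ ((1 + h * (M * Phi2 φ)) ^ j * L) • volume := by
  intro j
  induction j with
  | zero => intro _; simpa [lin]
  | succ j ih =>
    intro hj
    simp only [lin]
    rw [pow_succ', mul_assoc]
    exact step_vol hφ (hk j (by omega)) hh _ _ (ih (by omega))

end lin

lemma w_lap (x z : ℝ) : w (x + z) + w (x - z) ≤ 2 * w x + ENNReal.ofReal (2 * z ^ 2) := by
  unfold w
  rw [← ENNReal.ofReal_add (by positivity) (by positivity), show (2:ℝ≥0∞) = ENNReal.ofReal 2 by simp,
    ← ENNReal.ofReal_mul (by positivity), ← ENNReal.ofReal_add (by positivity) (by positivity)]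
  apply ENNReal.ofReal_le_ofReal
  nlinarith

lemma w_lap' (x z : ℝ) : w x * ENNReal.ofReal (2 * z ^ 2) ≤ 2 * ENNReal.ofReal (z ^ 2) * w x := by
  rw [ENNReal.ofReal_mul (by positivity)]; simp [mul_comm]

lemma w2_lap (x z : ℝ) (hz : 0 < z) (hx : z ≤ x) : w (x + z) ^ 2 + w (x - z) ^ 2 ≤
    2 * w x ^ 2 + ENNReal.ofReal (14 * z ^ 2 * (1 + x ^ 2)) := by
  unfold w
  rw [← ENNReal.ofReal_pow (by positivity), ← ENNReal.ofReal_pow (by positivity),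
    ← ENNReal.ofReal_pow (by positivity),
    ← ENNReal.ofReal_add (by positivity) (by positivity), show (2:ℝ≥0∞) = ENNReal.ofReal 2 by simp,
    ← ENNReal.ofReal_mul (by positivity), ← ENNReal.ofReal_add (by positivity) (by positivity)]
  apply ENNReal.ofReal_le_ofReal
  have h1 : z ^ 2 ≤ x ^ 2 := by gcongr
  have h2 : z ^ 2 * z ^ 2 ≤ z ^ 2 * x ^ 2 := by gcongr
  nlinarith [sq_nonneg z]

lemma w2_lap' (x z : ℝ) : w x * ENNReal.ofReal (14 * z ^ 2 * (1 + x ^ 2)) ≤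
    14 * ENNReal.ofReal (z ^ 2) * w x ^ 2 := by
  rw [ENNReal.ofReal_mul (by positivity), ENNReal.ofReal_mul (by positivity)]
  apply le_of_eq
  unfold w
  simp only [ENNReal.ofReal_ofNat]
  ring

/-- The parameters of the scheme. -/
structure Par (φ : ℝ → ℝ) (μ₀ : Measure ℝ) (a T P0 P2 : ℝ) : Prop where
  P0n : 0 ≤ P0
  P2n : 0 ≤ P2
  hP0 : Phi0 φ = ENNReal.ofReal P0
  hP2 : Phi2 φ = ENNReal.ofReal P2
  hT : 0 < T
  hd : 0 < a - 2 * P2 * T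
  hm : ∫⁻ x, w x ∂μ₀ ≤ ENNReal.ofReal (1 / a)

section eul
variable {K : ℝ → ℝ → ℝ → ℝ} {φ : ℝ → ℝ} {μ₀ : Measure ℝ} [SFinite μ₀] {a T P0 P2 N h : ℝ}

lemma euler_bound (H : Hyp K φ) (P : Par φ μ₀ a T P0 P2) (hN : 0 ≤ N) (h0 : 0 < h)
    (hh : 2 * h * (N * (1 / (a - 2 * P2 * T)) * P0) ≤ 1) :
    ∀ j : ℕ, j * h ≤ T → ∫⁻ x, w x ∂(euler K φ N (ENNReal.ofReal h) μ₀ j) ≤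
      ENNReal.ofReal (1 / (a - 2 * P2 * (j * h))) := by
  have hd := P.hd
  have hP2 := P.P2n
  have hP0 := P.P0n
  intro j
  induction j with
  | zero => intro _; simpa [euler] using P.hm
  | succ j ih =>
    intro hj
    push_cast at hj
    have hj' : j * h ≤ T := by nlinarith
    have ih := ih hj'
    set m := ∫⁻ x, w x ∂(euler K φ N (ENNReal.ofReal h) μ₀ j) with hm
    set A := a - 2 * P2 * (j * h) with hA
    have hA1 : a - 2 * P2 * T ≤ A := by rw [hA]; gcongr
    have hA0 : 0 < A := by linarith
    have hA2 : 0 < A - 2 * P2 * h := by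
      have : P2 * ((j + 1) * h) ≤ P2 * T := by gcongr
      nlinarith
    have hr : 2 * ENNReal.ofReal h * (ENNReal.ofReal N * m * Phi0 φ) ≤ 1 := by
      calc _ ≤ 2 * ENNReal.ofReal h * (ENNReal.ofReal N * ENNReal.ofReal (1 / (a - 2 * P2 * T)) * Phi0 φ) := by
            gcongr
            refine ih.trans (ENNReal.ofReal_le_ofReal ?_)
            gcongr
        _ = ENNReal.ofReal (2 * h * (N * (1 / (a - 2 * P2 * T)) * P0)) := by
            rw [P.hP0, ENNReal.ofReal_mul (by positivity), ENNReal.ofReal_mul (by positivity),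
              ENNReal.ofReal_mul (by positivity), ENNReal.ofReal_mul (by positivity)]; simp
        _ ≤ 1 := by simpa using hh
    have := step_moment H.φmeas (good_rateK H hN (euler K φ N (ENNReal.ofReal h) μ₀ j)) hr
      (euler K φ N (ENNReal.ofReal h) μ₀ j) w_meas (fun x z _ _ => w_lap x z) (fun x z _ _ => w_lap' x z)
    refine this.trans ?_
    rw [← hm, P.hP2]
    calc _ ≤ (1 + ENNReal.ofReal h * (2 * ENNReal.ofReal (1 / A) * ENNReal.ofReal P2)) * ENNReal.ofReal (1 / A) := by
          gcongr
      _ = ENNReal.ofReal ((1 + h * (2 * (1/A) * P2)) * (1/A)) := by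
          rw [ENNReal.ofReal_mul (by positivity), ENNReal.ofReal_add (by positivity) (by positivity),
            ENNReal.ofReal_mul (by positivity), ENNReal.ofReal_mul (by positivity),
            ENNReal.ofReal_mul (by positivity)]; simp
      _ ≤ _ := by
          apply ENNReal.ofReal_le_ofReal
          push_cast
          have e : a - 2 * P2 * ((j + 1) * h) = A - 2 * P2 * h := by rw [hA]; ring
          rw [e]
          rw [show (1 + h * (2 * (1/A) * P2)) * (1/A) = (A + 2 * P2 * h) / A ^ 2 by field_simp,
            div_le_div_iff₀ (by positivity) hA2]
          nlinarith [sq_nonneg (P2 * h)]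

/-- uniform bound on the second moment -/
def Mc (a T P2 : ℝ) : ℝ≥0∞ := ENNReal.ofReal (1 / (a - 2 * P2 * T))

lemma euler_bound' (H : Hyp K φ) (P : Par φ μ₀ a T P0 P2) (hN : 0 ≤ N) (h0 : 0 < h)
    (hh : 2 * h * (N * (1 / (a - 2 * P2 * T)) * P0) ≤ 1)
    (j : ℕ) (hj : j * h ≤ T) : ∫⁻ x, w x ∂(euler K φ N (ENNReal.ofReal h) μ₀ j) ≤ Mc a T P2 := by
  refine (euler_bound H P hN h0 hh j hj).trans (ENNReal.ofReal_le_ofReal ?_)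
  have hd := P.hd
  have hP2 := P.P2n
  gcongr

lemma euler_good (H : Hyp K φ) (P : Par φ μ₀ a T P0 P2) (hN : 0 ≤ N) (h0 : 0 < h)
    (hh : 2 * h * (N * (1 / (a - 2 * P2 * T)) * P0) ≤ 1)
    (j : ℕ) (hj : j * h ≤ T) :
    Good φ (ENNReal.ofReal N) (Mc a T P2) (rateK K φ N (euler K φ N (ENNReal.ofReal h) μ₀ j)) :=
  (good_rateK H hN _).mono (euler_bound' H P hN h0 hh j hj)

end eul

section eul2
variable {φ : ℝ → ℝ} {μ₀ : Measure ℝ} {a T P0 P2 N h : ℝ}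

lemma hhE (P : Par φ μ₀ a T P0 P2) (hN : 0 ≤ N) (h0 : 0 < h)
    (hh : 2 * h * (N * (1 / (a - 2 * P2 * T)) * P0) ≤ 1) :
    2 * ENNReal.ofReal h * (ENNReal.ofReal N * Mc a T P2 * Phi0 φ) ≤ 1 := by
  have hd := P.hd
  have hP0 := P.P0n
  unfold Mc
  calc _ = ENNReal.ofReal (2 * h * (N * (1 / (a - 2 * P2 * T)) * P0)) := by
        rw [P.hP0, ENNReal.ofReal_mul (by positivity), ENNReal.ofReal_mul (by positivity),
              ENNReal.ofReal_mul (by positivity), ENNReal.ofReal_mul (by positivity)]; simp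
    _ ≤ 1 := by simpa using hh

lemma pow_bd (P : Par φ μ₀ a T P0 P2) (h0 : 0 < h) (C : ℝ) (hC : 0 ≤ C) (j : ℕ) (hj : j * h ≤ T) :
    (1 + ENNReal.ofReal h * (ENNReal.ofReal C * Mc a T P2 * Phi2 φ)) ^ j ≤
      ENNReal.ofReal (Real.exp (C * (1 / (a - 2 * P2 * T)) * P2 * T)) := by
  have hd := P.hd
  have hP2 := P.P2n
  unfold Mc
  rw [P.hP2]
  set c := C * (1 / (a - 2 * P2 * T)) * P2 with hc
  have hc0 : 0 ≤ c := by positivity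
  have e : 1 + ENNReal.ofReal h * (ENNReal.ofReal C * ENNReal.ofReal (1 / (a - 2 * P2 * T)) * ENNReal.ofReal P2)
     = ENNReal.ofReal (1 + h * c) := by
    rw [ENNReal.ofReal_add (by positivity) (by positivity), ENNReal.ofReal_mul (by positivity), hc,
      ENNReal.ofReal_mul (by positivity), ENNReal.ofReal_mul (by positivity)]; simp
  rw [e, ← ENNReal.ofReal_pow (by positivity)]
  apply ENNReal.ofReal_le_ofReal
  calc (1 + h * c) ^ j ≤ (Real.exp (h * c)) ^ j := by
        gcongr; rw [add_comm]; exact Real.add_one_le_exp _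
    _ = Real.exp (c * (j * h)) := by rw [← Real.exp_nat_mul]; ring_nf
    _ ≤ Real.exp (c * T) := by gcongr

end eul2
end CG

namespace CG

/-- finite reference measure -/
def nu : Measure ℝ := volume.withDensity (fun x => (w x)⁻¹)

instance : IsFiniteMeasure nu := by
  constructor
  unfold nu
  rw [withDensity_apply _ MeasurableSet.univ, Measure.restrict_univ]
  have : ∀ x, (w x)⁻¹ = ENNReal.ofReal ((1 + x ^ 2)⁻¹) := fun x => by
    unfold w; rw [ENNReal.ofReal_inv_of_pos (by positivity)]
  simp_rw [this]
  exact integrable_inv_one_add_sq.lintegral_lt_top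

lemma w_split (x : ℝ) (δ : ℝ≥0∞) :
    w x ≤ δ * w x ^ 2 + (δ⁻¹ * δ⁻¹) * (w x)⁻¹ := by
  have a0 := w_ne_zero x
  have at' := w_ne_top x
  rcases le_total 1 (δ * w x) with h | h
  · refine le_trans ?_ le_self_add
    calc w x = 1 * w x := by rw [one_mul]
      _ ≤ δ * w x * w x := by gcongr
      _ = _ := by ring
  · refine le_trans ?_ le_add_self
    have h2 : w x ≤ δ⁻¹ := by
      rw [ENNReal.le_inv_iff_mul_le, mul_comm]; exact h
    calc w x = w x * w x * (w x)⁻¹ := by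
          rw [mul_assoc, ENNReal.mul_inv_cancel a0 at', mul_one]
      _ ≤ _ := by gcongr

variable {K : ℝ → ℝ → ℝ → ℝ} {φ : ℝ → ℝ} {a T P0 P2 : ℝ} {d : ℝ → ℝ≥0∞}

lemma euler_UI (hd : Measurable d) (hdt : ∀ x, d x ≠ ∞)
    (H : Hyp K φ) (P : Par φ (zeta.withDensity d) a T P0 P2)
    (ε : ℝ≥0∞) (hε : ε ≠ 0) : ∃ C : ℝ≥0∞, C ≠ ∞ ∧ ∀ N h : ℝ, 0 ≤ N → 0 < h →
      2 * h * (N * (1 / (a - 2 * P2 * T)) * P0) ≤ 1 → ∀ j : ℕ, j * h ≤ T → ∀ A : Set ℝ,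
      MeasurableSet A →
      ∫⁻ x in A, w x ∂(euler K φ N (ENNReal.ofReal h) (zeta.withDensity d) j) ≤ ε + C * nu A := by
  set μ₀ := zeta.withDensity d with hμ₀
  have wm := w_meas
  set e1 := ENNReal.ofReal (Real.exp (2 * (1 / (a - 2 * P2 * T)) * P2 * T)) with he1
  set e2 := ENNReal.ofReal (Real.exp (14 * (1 / (a - 2 * P2 * T)) * P2 * T)) with he2
  set e3 := ENNReal.ofReal (Real.exp (1 * (1 / (a - 2 * P2 * T)) * P2 * T)) with he3
  have hmt : ∫⁻ x, w x ∂μ₀ ≠ ∞ := ne_top_of_le_ne_top ENNReal.ofReal_ne_top P.hm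
  set E : ℕ → Set ℝ := fun n => {x | w x ≤ n ∧ d x ≤ n} with hE
  have hEm : ∀ n, MeasurableSet (E n) := fun n =>
    (measurableSet_le wm measurable_const).inter (measurableSet_le hd measurable_const)
  have ht : Tendsto (fun n => (μ₀.withDensity w) (E n)ᶜ) atTop (𝓝 0) := by
    have : (0 : ℝ≥0∞) = (μ₀.withDensity w) (⋂ n, (E n)ᶜ) := by
      have : (⋂ n, (E n)ᶜ) = ∅ := by
        rw [eq_empty_iff_forall_notMem]
        intro x hx
        rw [mem_iInter] at hx
        obtain ⟨n, hn⟩ := ENNReal.exists_nat_gt (max_lt (w_ne_top x).lt_top (hdt x).lt_top).ne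
        exact hx n ⟨(le_max_left _ _).trans hn.le, (le_max_right _ _).trans hn.le⟩
      rw [this]; simp
    rw [this]
    apply tendsto_measure_iInter_atTop
    · intro n; exact (hEm n).compl.nullMeasurableSet
    · intro m n hmn
      apply compl_subset_compl.2
      intro x hx
      have : (m : ℝ≥0∞) ≤ n := by exact_mod_cast hmn
      exact ⟨hx.1.trans this, hx.2.trans this⟩
    · refine ⟨0, ?_⟩
      refine ne_top_of_le_ne_top hmt ?_
      refine (measure_mono (subset_univ _)).trans ?_
      rw [withDensity_apply _ MeasurableSet.univ, Measure.restrict_univ]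
  have hε2 : (0 : ℝ≥0∞) < ε / 2 := (ENNReal.half_pos hε)
  obtain ⟨n, hn⟩ : ∃ n, e1 * (μ₀.withDensity w) (E n)ᶜ < ε / 2 := by
    have := ENNReal.Tendsto.const_mul (a := e1) ht (Or.inr ENNReal.ofReal_ne_top)
    rw [mul_zero] at this
    exact (this.eventually_lt_const hε2).exists
  set u₀ := μ₀.restrict (E n) with hu₀
  set v₀ := μ₀.restrict (E n)ᶜ with hv₀
  have huv : μ₀ = u₀ + v₀ := (Measure.restrict_add_restrict_compl (hEm n)).symm
  have hv : e1 * ∫⁻ x, w x ∂v₀ < ε / 2 := by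
    rw [withDensity_apply _ (hEm n).compl] at hn; exact hn
  have hu1 : u₀ ≤ (n : ℝ≥0∞) • volume := by
    rw [Measure.le_iff]; intro B hB
    rw [hu₀, Measure.restrict_apply hB, hμ₀, withDensity_apply _ (hB.inter (hEm n))]
    calc _ ≤ ∫⁻ x in B ∩ E n, (n : ℝ≥0∞) ∂zeta := by
          apply setLIntegral_mono measurable_const
          intro x hx; exact hx.2.2
      _ = n * zeta (B ∩ E n) := by rw [setLIntegral_const]
      _ ≤ n * volume B := by
          refine mul_le_mul_right ?_ _
          unfold zeta
          exact (Measure.restrict_apply_le _ _).trans (measure_mono inter_subset_left)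
      _ = _ := by simp
  have hu2 : ∫⁻ x, w x ^ 2 ∂u₀ ≤ n * ∫⁻ x, w x ∂μ₀ := by
    rw [← lintegral_const_mul _ wm]
    calc _ ≤ ∫⁻ x in E n, n * w x ∂μ₀ := by
          apply setLIntegral_mono (by fun_prop)
          intro x hx
          rw [pow_two]; gcongr; exact hx.1
      _ ≤ _ := setLIntegral_le_lintegral _ _
  set B := e2 * (n * ∫⁻ x, w x ∂μ₀) with hB
  have hBt : B ≠ ∞ := ENNReal.mul_ne_top ENNReal.ofReal_ne_top
    (ENNReal.mul_ne_top (by simp) hmt)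
  obtain ⟨δ, hδ, hδB⟩ := ENNReal.exists_nnreal_pos_mul_lt hBt hε2.ne'
  have hδ0 : (δ : ℝ≥0∞) ≠ 0 := by simpa using hδ.ne'
  refine ⟨(δ : ℝ≥0∞)⁻¹ * (δ : ℝ≥0∞)⁻¹ * (e3 * n), ?_, ?_⟩
  · refine ENNReal.mul_ne_top (ENNReal.mul_ne_top ?_ ?_) (ENNReal.mul_ne_top ENNReal.ofReal_ne_top (by simp)) <;> simpa using hδ.ne'
  intro N h hN h0 hh j hj A hA
  have hG : ∀ i < j, Good φ (ENNReal.ofReal N) (Mc a T P2)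
      (rateK K φ N (euler K φ N (ENNReal.ofReal h) μ₀ i)) := by
    intro i hi
    refine euler_good H P hN h0 hh i (le_trans ?_ hj)
    have : (i:ℝ) ≤ j := by exact_mod_cast hi.le
    gcongr
  have hh' := hhE P hN h0 hh
  rw [euler_eq_lin]
  set k := fun i => rateK K φ N (euler K φ N (ENNReal.ofReal h) μ₀ i) with hk
  have el : lin (ENNReal.ofReal h) k μ₀ j = lin (ENNReal.ofReal h) k u₀ j + lin (ENNReal.ofReal h) k v₀ j := by
    conv_lhs => rw [huv]
    exact lin_add hG u₀ v₀ j le_rfl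
  rw [el, Measure.restrict_add, lintegral_add_measure]
  have q1 : ∫⁻ x in A, w x ∂(lin (ENNReal.ofReal h) k v₀ j) ≤ ε / 2 := by
    refine (setLIntegral_le_lintegral _ _).trans (le_trans ?_ hv.le)
    refine (lin_moment H.φmeas hh' hG v₀ wm (fun x z _ _ => w_lap x z) (fun x z _ _ => w_lap' x z) j le_rfl).trans ?_
    gcongr
    have := pow_bd P h0 2 (by norm_num) j hj
    rwa [ENNReal.ofReal_ofNat] at this
  have q2 : ∫⁻ x, w x ^ 2 ∂(lin (ENNReal.ofReal h) k u₀ j) ≤ B := by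
    refine (lin_moment H.φmeas hh' hG u₀ (wm.pow_const 2) w2_lap (fun x z _ _ => w2_lap' x z) j le_rfl).trans ?_
    rw [hB]
    gcongr
    have := pow_bd P h0 14 (by norm_num) j hj
    rwa [ENNReal.ofReal_ofNat] at this
  have q3 : lin (ENNReal.ofReal h) k u₀ j ≤ (e3 * n) • volume := by
    refine (lin_vol H.φmeas hh' hG u₀ _ hu1 j le_rfl).trans ?_
    have := pow_bd P h0 1 (by norm_num) j hj
    rw [ENNReal.ofReal_one, one_mul] at this
    rw [Measure.le_iff]; intro D hD
    simp only [Measure.smul_apply, smul_eq_mul]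
    gcongr
  have q4 : ∫⁻ x in A, (w x)⁻¹ ∂(lin (ENNReal.ofReal h) k u₀ j) ≤ (e3 * n) * nu A := by
    unfold nu
    rw [withDensity_apply _ hA, ← smul_eq_mul, ← lintegral_smul_measure, ← Measure.restrict_smul]
    exact lintegral_mono' (Measure.restrict_mono le_rfl q3) le_rfl
  calc _ ≤ (∫⁻ x in A, (δ * w x ^ 2 + ((δ:ℝ≥0∞)⁻¹ * (δ:ℝ≥0∞)⁻¹) * (w x)⁻¹) ∂(lin (ENNReal.ofReal h) k u₀ j)) + ε / 2 := by
        gcongr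
        exact w_split _ _
    _ = δ * (∫⁻ x in A, w x ^ 2 ∂(lin (ENNReal.ofReal h) k u₀ j)) + ((δ:ℝ≥0∞)⁻¹ * (δ:ℝ≥0∞)⁻¹) * (∫⁻ x in A, (w x)⁻¹ ∂(lin (ENNReal.ofReal h) k u₀ j)) + ε / 2 := by
        rw [lintegral_add_left (by fun_prop), lintegral_const_mul _ (by fun_prop), lintegral_const_mul _ (by fun_prop)]
    _ ≤ δ * B + ((δ:ℝ≥0∞)⁻¹ * (δ:ℝ≥0∞)⁻¹) * ((e3 * n) * nu A) + ε / 2 := by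
        gcongr
        exact (setLIntegral_le_lintegral _ _).trans q2
    _ ≤ ε / 2 + ((δ:ℝ≥0∞)⁻¹ * (δ:ℝ≥0∞)⁻¹) * ((e3 * n) * nu A) + ε / 2 := by gcongr
    _ = ε + _ := by
        rw [add_right_comm, ENNReal.add_halves, ← mul_assoc _ (e3 * (n:ℝ≥0∞)) (nu A)]

end CG

namespace CG

lemma exists_ulim (U : Ultrafilter ℕ) (u : ℕ → ℝ≥0∞) : ∃ l, Tendsto u U (𝓝 l) := by
  obtain ⟨l, _, hl⟩ := isCompact_univ.ultrafilter_le_nhds (U.map u) (by simp)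
  exact ⟨l, hl⟩

def ulim (U : Ultrafilter ℕ) (u : ℕ → ℝ≥0∞) : ℝ≥0∞ := (exists_ulim U u).choose
lemma ulim_spec (U : Ultrafilter ℕ) (u : ℕ → ℝ≥0∞) : Tendsto u U (𝓝 (ulim U u)) :=
  (exists_ulim U u).choose_spec
lemma ulim_eq {U : Ultrafilter ℕ} {u : ℕ → ℝ≥0∞} {l : ℝ≥0∞} (h : Tendsto u U (𝓝 l)) : ulim U u = l :=
  tendsto_nhds_unique (ulim_spec U u) h

section
variable {α : Type*} [MeasurableSpace α]

def UI (ν : Measure α) (p : ℕ → Measure α) : Prop :=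
  ∀ ε : ℝ≥0∞, ε ≠ 0 → ∃ C : ℝ≥0∞, C ≠ ∞ ∧ ∀ n A, MeasurableSet A → p n A ≤ ε + C * ν A

lemma exists_limit_measure (U : Ultrafilter ℕ) (ν : Measure α) [IsFiniteMeasure ν] (p : ℕ → Measure α)
    (h : UI ν p) : ∃ q : Measure α, ∀ A, MeasurableSet A → Tendsto (fun n => p n A) U (𝓝 (q A)) := by
  set l : Set α → ℝ≥0∞ := fun A => ulim U (fun n => p n A) with hl
  have ladd : ∀ A B, Disjoint A B → MeasurableSet B → l (A ∪ B) = l A + l B := by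
    intro A B hAB hB
    apply ulim_eq
    simp_rw [measure_union hAB hB]
    exact (ulim_spec U _).add (ulim_spec U _)
  have lle : ∀ ε : ℝ≥0∞, ε ≠ 0 → ∃ C : ℝ≥0∞, C ≠ ∞ ∧ ∀ A, MeasurableSet A → l A ≤ ε + C * ν A := by
    intro ε hε
    obtain ⟨C, hC, hCA⟩ := h ε hε
    exact ⟨C, hC, fun A hA => le_of_tendsto (ulim_spec U _) (Eventually.of_forall fun n => hCA n A hA)⟩
  refine ⟨Measure.ofMeasurable (fun A _ => l A) ?_ ?_, ?_⟩
  · apply ulim_eq; simp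
  · intro A hA hd
    set R : ℕ → Set α := fun k => ⋃ i, A (i + k) with hR
    have hRm : ∀ k, MeasurableSet (R k) := fun k => MeasurableSet.iUnion fun i => hA _
    have hRs : ∀ k, R k = A k ∪ R (k+1) := by
      intro k
      ext x
      simp only [hR, mem_iUnion, mem_union]
      constructor
      · rintro ⟨i, hi⟩
        cases i with
        | zero => left; simpa using hi
        | succ i => right; exact ⟨i, by convert hi using 2; ring⟩
      · rintro (hx | ⟨i, hi⟩)
        · exact ⟨0, by simpa using hx⟩
        · exact ⟨i + 1, by convert hi using 2; ring⟩
    have hRd : ∀ k, Disjoint (A k) (R (k+1)) := by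
      intro k
      rw [disjoint_iUnion_right]
      intro i
      exact hd (by omega)
    have hs : ∀ k, l (⋃ i, A i) = ∑ i ∈ Finset.range k, l (A i) + l (R k) := by
      intro k
      induction k with
      | zero => simp [hR]
      | succ k ih =>
        rw [ih, hRs k, ladd _ _ (hRd k) (hRm _), Finset.sum_range_succ, add_assoc]
    have hν : Tendsto (fun k => ν (R k)) atTop (𝓝 0) := by
      have : (0 : ℝ≥0∞) = ν (⋂ k, R k) := by
        have : (⋂ k, R k) = ∅ := by
          rw [eq_empty_iff_forall_notMem]
          intro x hx
          rw [mem_iInter] at hx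
          obtain ⟨i, hi⟩ := mem_iUnion.1 (hx 0)
          obtain ⟨i', hi'⟩ := mem_iUnion.1 (hx (i+1))
          have : i + 0 ≠ i' + (i + 1) := by omega
          exact (disjoint_left.1 (hd this)) hi hi'
        rw [this]; simp
      rw [this]
      apply tendsto_measure_iInter_atTop
      · intro n; exact (hRm n).nullMeasurableSet
      · apply antitone_nat_of_succ_le
        intro k
        rw [hRs k]; exact subset_union_right
      · exact ⟨0, measure_ne_top _ _⟩
    have h0 : Tendsto (fun k => l (R k)) atTop (𝓝 0) := by
      rw [ENNReal.tendsto_nhds_zero]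
      intro ε hε
      obtain ⟨C, hC, hCA⟩ := lle (ε/2) (ENNReal.half_pos hε.ne').ne'
      have := ENNReal.Tendsto.const_mul (a := C) hν (Or.inr hC)
      rw [mul_zero] at this
      filter_upwards [this.eventually_le_const (ENNReal.half_pos hε.ne')] with k hk
      calc _ ≤ ε / 2 + C * ν (R k) := hCA _ (hRm k)
        _ ≤ ε / 2 + ε / 2 := by gcongr
        _ = ε := ENNReal.add_halves ε
    have t1 : Tendsto (fun k => ∑ i ∈ Finset.range k, l (A i) + l (R k)) atTop (𝓝 (∑' i, l (A i) + 0)) :=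
      (ENNReal.summable.hasSum.tendsto_sum_nat).add h0
    simp_rw [← hs, add_zero] at t1
    exact tendsto_nhds_unique tendsto_const_nhds t1
  · intro A hA
    rw [Measure.ofMeasurable_apply _ hA]
    exact ulim_spec U _

lemma limit_lintegral (U : Ultrafilter ℕ) {p : ℕ → Measure α} {q : Measure α} {B : ℝ≥0∞} (hB : B ≠ ∞)
    (hp : ∀ n, p n univ ≤ B)
    (hq : ∀ A, MeasurableSet A → Tendsto (fun n => p n A) U (𝓝 (q A)))
    {f : α → ℝ≥0∞} (hf : Measurable f) {C : ℝ≥0∞} (hC : C ≠ ∞) (hfC : ∀ x, f x ≤ C) :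
    Tendsto (fun n => ∫⁻ x, f x ∂(p n)) U (𝓝 (∫⁻ x, f x ∂q)) := by
  have key : ∀ g : α → ℝ≥0∞, (∀ x, g x ≤ C) → ∫⁻ x, g x ∂q ≤ ulim U (fun n => ∫⁻ x, g x ∂(p n)) := by
    intro g hg
    rw [lintegral_def]
    refine iSup₂_le fun s hs => ?_
    have : Tendsto (fun n => s.lintegral (p n)) U (𝓝 (s.lintegral q)) := by
      unfold SimpleFunc.lintegral
      apply tendsto_finsetSum
      intro x hx
      obtain ⟨y, rfl⟩ := SimpleFunc.mem_range.1 hx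
      apply ENNReal.Tendsto.const_mul (hq _ (s.measurableSet_fiber _))
      exact Or.inr (ne_top_of_le_ne_top hC ((hs y).trans (hg y)))
    refine le_of_tendsto_of_tendsto this (ulim_spec U _) (Eventually.of_forall fun n => ?_)
    show s.lintegral (p n) ≤ ∫⁻ x, g x ∂(p n)
    rw [← SimpleFunc.lintegral_eq_lintegral]
    exact lintegral_mono hs
  have hqB : q univ ≤ B := le_of_tendsto (hq _ MeasurableSet.univ) (Eventually.of_forall hp)
  have s : ∀ m : Measure α, ∫⁻ x, f x ∂m + ∫⁻ x, (C - f x) ∂m = C * m univ := by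
    intro m
    rw [← lintegral_add_left hf, ← lintegral_const]
    congr 1; ext x; exact add_tsub_cancel_of_le (hfC x)
  have k1 := key f hfC
  have k2 := key (fun x => C - f x) (fun x => tsub_le_self)
  have l1 := (ulim_spec U (fun n => ∫⁻ x, f x ∂(p n)))
  have l2 := (ulim_spec U (fun n => ∫⁻ x, (C - f x) ∂(p n)))
  have l3 := l1.add l2
  simp_rw [s] at l3
  have l4 := ENNReal.Tendsto.const_mul (a := C) (hq _ MeasurableSet.univ) (Or.inr hC)
  have e := tendsto_nhds_unique l3 l4
  rw [← s q] at e
  have hfin : ∫⁻ x, f x ∂q + ∫⁻ x, (C - f x) ∂q ≠ ∞ := by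
    rw [s]; exact ENNReal.mul_ne_top hC (ne_top_of_le_ne_top hB hqB)
  have : ulim U (fun n => ∫⁻ x, f x ∂(p n)) = ∫⁻ x, f x ∂q := by
    refine le_antisymm ?_ k1
    rw [← ENNReal.add_le_add_iff_right (a := ∫⁻ x, (C - f x) ∂q) (fun h => hfin (by rw [h]; simp))]
    rw [← e]
    gcongr
  rw [← this]; exact l1

/-- weighted compactness -/
lemma lemmaU (U : Ultrafilter ℕ) (ν : Measure α) [IsFiniteMeasure ν] (m : ℕ → Measure α)
    {W : α → ℝ≥0∞} (hW : Measurable W) (hW1 : ∀ x, W x ≠ 0) (hWt : ∀ x, W x ≠ ∞)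
    (h : UI ν (fun n => (m n).withDensity W)) :
    ∃ q : Measure α, ∀ g : α → ℝ≥0∞, Measurable g → ∀ C : ℝ≥0∞, C ≠ ∞ → (∀ x, g x ≤ C * W x) →
      Tendsto (fun n => ∫⁻ x, g x ∂(m n)) U (𝓝 (∫⁻ x, g x ∂q)) := by
  obtain ⟨q, hq⟩ := exists_limit_measure U ν _ h
  refine ⟨q.withDensity (fun x => (W x)⁻¹), ?_⟩
  intro g hg C hC hgC
  obtain ⟨C1, hC1, hC1A⟩ := h 1 one_ne_zero
  have := limit_lintegral U (B := 1 + C1 * ν univ) (C := C)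
    (by finiteness) (fun n => hC1A n _ MeasurableSet.univ) hq (f := fun x => (W x)⁻¹ * g x)
    (by fun_prop) hC (fun x => by
      calc (W x)⁻¹ * g x ≤ (W x)⁻¹ * (C * W x) := by gcongr; exact hgC x
        _ = C * ((W x)⁻¹ * W x) := by ring
        _ = C := by rw [ENNReal.inv_mul_cancel (hW1 x) (hWt x), mul_one])
  rw [lintegral_withDensity_eq_lintegral_mul _ (by fun_prop) hg]
  refine Tendsto.congr (fun n => ?_) this
  rw [lintegral_withDensity_eq_lintegral_mul _ hW (by fun_prop)]
  congr 1; ext x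
  simp only [Pi.mul_apply]
  rw [← mul_assoc, ENNReal.mul_inv_cancel (hW1 x) (hWt x), one_mul]
end
end CG

namespace CG

/-- integrate out `z` -/
def FF (K' : ℝ → ℝ → ℝ → ℝ≥0∞) (g : ℝ × ℝ → ℝ≥0∞) (x y : ℝ) : ℝ≥0∞ :=
  ∫⁻ z, K' x y z * g (x, z) ∂zeta

lemma FF_meas {K' : ℝ → ℝ → ℝ → ℝ≥0∞} {g : ℝ × ℝ → ℝ≥0∞}
    (hK : Measurable (fun p : ℝ × ℝ × ℝ => K' p.1 p.2.1 p.2.2)) (hg : Measurable g) :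
    Measurable (fun p : ℝ × ℝ => FF K' g p.1 p.2) := by
  unfold FF
  refine Measurable.lintegral_prod_right' (f := fun q : (ℝ × ℝ) × ℝ => K' q.1.1 q.1.2 q.2 * g (q.1.1, q.2)) ?_
  refine Measurable.mul (hK.comp (f := fun q : (ℝ × ℝ) × ℝ => (q.1.1, q.1.2, q.2)) (by fun_prop)) ?_
  exact hg.comp (by fun_prop)

lemma FF_le {K : ℝ → ℝ → ℝ → ℝ} {φ : ℝ → ℝ} (H : Hyp K φ) {K' : ℝ → ℝ → ℝ → ℝ≥0∞}
    (hK' : ∀ x y z, K' x y z ≤ ENNReal.ofReal (K x y z)) {g : ℝ × ℝ → ℝ≥0∞} (hg : ∀ p, g p ≤ 2) (x y : ℝ) :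
    FF K' g x y ≤ 2 * Phi0 φ * (w x * w y) := by
  have hφ := H.φmeas
  unfold FF Phi0
  rw [mul_comm, mul_comm (2:ℝ≥0∞), ← mul_assoc, ← lintegral_const_mul _ (by fun_prop), ← lintegral_mul_const _ (by fun_prop)]
  refine lintegral_mono_ae (ae_zeta fun z hz => ?_)
  gcongr
  · exact (hK' x y z).trans (K_le H x y hz)
  · exact hg _

section
variable {K : ℝ → ℝ → ℝ → ℝ} {φ : ℝ → ℝ} {μ₀ : Measure ℝ} [SFinite μ₀] {a T P0 P2 N h : ℝ}

lemma rate_swap (H : Hyp K φ) (N : ℝ) (μ : Measure ℝ) [SFinite μ] {g : ℝ × ℝ → ℝ≥0∞} (hg : Measurable g) :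
    ∫⁻ x, ∫⁻ z, rateK K φ N μ (x, z) * g (x, z) ∂zeta ∂μ =
      ∫⁻ x, ∫⁻ y, FF (KnE K φ N) g x y ∂μ ∂μ := by
  have hm := KnE_meas H N
  congr 1; ext x
  unfold FF rateK
  rw [lintegral_lintegral_swap (f := fun y z => KnE K φ N x y z * g (x, z))]
  · congr 1; ext z
    rw [lintegral_mul_const]
    exact hm.comp (f := fun y => (x, y, z)) (by fun_prop)
  · apply Measurable.aemeasurable
    refine Measurable.mul (hm.comp (f := fun q : ℝ × ℝ => (x, q.1, q.2)) (by fun_prop)) ?_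
    exact hg.comp (by fun_prop)

lemma FFint_le (H : Hyp K φ) {K' : ℝ → ℝ → ℝ → ℝ≥0∞}
    (hK' : ∀ x y z, K' x y z ≤ ENNReal.ofReal (K x y z)) {g : ℝ × ℝ → ℝ≥0∞} (hg : ∀ p, g p ≤ 2)
    (μ : Measure ℝ) {B : ℝ≥0∞} (hB : ∫⁻ x, w x ∂μ ≤ B) :
    ∫⁻ x, ∫⁻ y, FF K' g x y ∂μ ∂μ ≤ 2 * Phi0 φ * (B * B) := by
  have wm := w_meas
  calc _ ≤ ∫⁻ x, ∫⁻ y, 2 * Phi0 φ * (w x * w y) ∂μ ∂μ := by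
        gcongr; exact FF_le H hK' hg _ _
    _ = 2 * Phi0 φ * ((∫⁻ x, w x ∂μ) * ∫⁻ x, w x ∂μ) := by
        rw [← lintegral_mul_const _ (by fun_prop), ← lintegral_const_mul _ (by fun_prop)]
        congr 1; ext x
        rw [← lintegral_const_mul _ (by fun_prop), ← lintegral_const_mul _ (by fun_prop)]
    _ ≤ _ := by gcongr

/-- piecewise constant interpolation -/
def cur (K : ℝ → ℝ → ℝ → ℝ) (φ : ℝ → ℝ) (N h : ℝ) (μ₀ : Measure ℝ) (T s : ℝ) : Measure ℝ :=
  euler K φ N (ENNReal.ofReal h) μ₀ ⌊min s T / h⌋₊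

instance cur_sfinite (s : ℝ) : SFinite (cur K φ N h μ₀ T s) := by unfold cur; infer_instance

def gainG (f : ℝ → ℝ≥0∞) (p : ℝ × ℝ) : ℝ≥0∞ := f (p.1 + p.2) + f (p.1 - p.2)
def lossG (f : ℝ → ℝ≥0∞) (p : ℝ × ℝ) : ℝ≥0∞ := 2 * f p.1

lemma gainG_meas {f : ℝ → ℝ≥0∞} (hf : Measurable f) : Measurable (gainG f) := by
  unfold gainG; fun_prop
lemma lossG_meas {f : ℝ → ℝ≥0∞} (hf : Measurable f) : Measurable (lossG f) := by
  unfold lossG; fun_prop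
lemma gainG_le {f : ℝ → ℝ≥0∞} (hf : ∀ x, f x ≤ 1) (p) : gainG f p ≤ 2 := by
  unfold gainG; rw [← one_add_one_eq_two]; exact add_le_add (hf _) (hf _)
lemma lossG_le {f : ℝ → ℝ≥0∞} (hf : ∀ x, f x ≤ 1) (p) : lossG f p ≤ 2 := by
  unfold lossG; calc _ ≤ 2 * (1:ℝ≥0∞) := by gcongr; exact hf _
    _ = 2 := mul_one _

def Lc (φ : ℝ → ℝ) (a T P2 : ℝ) : ℝ≥0∞ := 2 * Phi0 φ * (Mc a T P2 * Mc a T P2)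

lemma euler_weak (H : Hyp K φ) (P : Par φ μ₀ a T P0 P2) (hN : 0 ≤ N) (h0 : 0 < h)
    (hh : 2 * h * (N * (1 / (a - 2 * P2 * T)) * P0) ≤ 1)
    (j : ℕ) (hj : j * h ≤ T) {f : ℝ → ℝ≥0∞} (hf : Measurable f) :
    ∫⁻ x, f x ∂(euler K φ N (ENNReal.ofReal h) μ₀ (j+1)) + ENNReal.ofReal h *
      ∫⁻ x, ∫⁻ y, FF (KnE K φ N) (lossG f) x y ∂(euler K φ N (ENNReal.ofReal h) μ₀ j) ∂(euler K φ N (ENNReal.ofReal h) μ₀ j)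
    = ∫⁻ x, f x ∂(euler K φ N (ENNReal.ofReal h) μ₀ j) + ENNReal.ofReal h *
      ∫⁻ x, ∫⁻ y, FF (KnE K φ N) (gainG f) x y ∂(euler K φ N (ENNReal.ofReal h) μ₀ j) ∂(euler K φ N (ENNReal.ofReal h) μ₀ j) := by
  rw [← rate_swap H N _ (lossG_meas hf), ← rate_swap H N _ (gainG_meas hf)]
  exact step_weak H.φmeas (euler_good H P hN h0 hh j hj) (hhE P hN h0 hh) _ hf

lemma euler_lip (H : Hyp K φ) (P : Par φ μ₀ a T P0 P2) (hN : 0 ≤ N) (h0 : 0 < h)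
    (hh : 2 * h * (N * (1 / (a - 2 * P2 * T)) * P0) ≤ 1)
    (i j : ℕ) (hj : ((i + j : ℕ) : ℝ) * h ≤ T) {f : ℝ → ℝ≥0∞} (hf : Measurable f) (hf1 : ∀ x, f x ≤ 1) :
    ∫⁻ x, f x ∂(euler K φ N (ENNReal.ofReal h) μ₀ (i + j)) ≤ ∫⁻ x, f x ∂(euler K φ N (ENNReal.ofReal h) μ₀ i)
      + j * ENNReal.ofReal h * Lc φ a T P2 ∧
    ∫⁻ x, f x ∂(euler K φ N (ENNReal.ofReal h) μ₀ i) ≤ ∫⁻ x, f x ∂(euler K φ N (ENNReal.ofReal h) μ₀ (i + j))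
      + j * ENNReal.ofReal h * Lc φ a T P2 := by
  induction j with
  | zero => simp
  | succ j ih =>
    have hj' : ((i + j : ℕ) : ℝ) * h ≤ T := le_trans (by push_cast; nlinarith) hj
    obtain ⟨i1, i2⟩ := ih hj'
    have e := euler_weak H P hN h0 hh (i + j) hj' hf
    have b := euler_bound' H P hN h0 hh (i + j) hj'
    have g1 := FFint_le H (KnE_le (φ := φ) N) (gainG_le hf1) _ b
    have l1 := FFint_le H (KnE_le (φ := φ) N) (lossG_le hf1) _ b
    rw [show i + (j + 1) = i + j + 1 by ring]
    constructor
    · calc _ ≤ _ := le_self_add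
        _ = _ := e
        _ ≤ (∫⁻ x, f x ∂(euler K φ N (ENNReal.ofReal h) μ₀ i) + j * ENNReal.ofReal h * Lc φ a T P2) + ENNReal.ofReal h * Lc φ a T P2 := by
            gcongr; exact g1
        _ = _ := by push_cast; ring
    · calc _ ≤ _ := i2
        _ ≤ (∫⁻ x, f x ∂(euler K φ N (ENNReal.ofReal h) μ₀ (i + j + 1)) + ENNReal.ofReal h * Lc φ a T P2) + j * ENNReal.ofReal h * Lc φ a T P2 := by
            gcongr
            refine le_trans (le_self_add.trans_eq e.symm) ?_
            gcongr; exact l1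
        _ = _ := by push_cast; ring

lemma floor_le' (hT : 0 < T) (h0 : 0 < h) (s : ℝ) : (⌊min s T / h⌋₊ : ℝ) * h ≤ T := by
  rcases le_total 0 (min s T) with h1 | h1
  · have := Nat.floor_le (div_nonneg h1 h0.le)
    rw [le_div_iff₀ h0] at this
    exact this.trans (min_le_right _ _)
  · rw [Nat.floor_of_nonpos (div_nonpos_of_nonpos_of_nonneg h1 h0.le)]
    simpa using hT.le

lemma cur_lip (H : Hyp K φ) (P : Par φ μ₀ a T P0 P2) (hN : 0 ≤ N) (h0 : 0 < h)
    (hh : 2 * h * (N * (1 / (a - 2 * P2 * T)) * P0) ≤ 1)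
    {s s' : ℝ} (hs : 0 ≤ s) (hss : s ≤ s') (hs' : s' ≤ T) {f : ℝ → ℝ≥0∞} (hf : Measurable f) (hf1 : ∀ x, f x ≤ 1) :
    ∫⁻ x, f x ∂(cur K φ N h μ₀ T s') ≤ ∫⁻ x, f x ∂(cur K φ N h μ₀ T s) + ENNReal.ofReal (s' - s + h) * Lc φ a T P2 ∧
    ∫⁻ x, f x ∂(cur K φ N h μ₀ T s) ≤ ∫⁻ x, f x ∂(cur K φ N h μ₀ T s') + ENNReal.ofReal (s' - s + h) * Lc φ a T P2 := by
  unfold cur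
  have hf' := floor_le' P.hT h0 s'
  rw [min_eq_left hs'] at hf' ⊢
  rw [min_eq_left (hss.trans hs')]
  obtain ⟨j, hj⟩ := Nat.exists_eq_add_of_le (Nat.floor_mono (div_le_div_of_nonneg_right hss h0.le))
  have f1 := Nat.floor_le (div_nonneg (hs.trans hss) h0.le)
  have f2 := Nat.lt_floor_add_one (s / h)
  rw [hj] at f1 hf' ⊢
  rw [le_div_iff₀ h0] at f1
  rw [div_lt_iff₀ h0] at f2
  push_cast at f1
  have hjh : (j : ℝ≥0∞) * ENNReal.ofReal h ≤ ENNReal.ofReal (s' - s + h) := by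
    rw [← ENNReal.ofReal_natCast, ← ENNReal.ofReal_mul (by positivity)]
    apply ENNReal.ofReal_le_ofReal
    nlinarith
  obtain ⟨a1, a2⟩ := euler_lip H P hN h0 hh ⌊s / h⌋₊ j hf' hf hf1
  constructor
  · refine a1.trans ?_; gcongr
  · refine a2.trans ?_; gcongr

lemma sum_int (h0 : 0 < h) (G : ℕ → ℝ≥0∞) (J : ℕ) (hJ : J * h ≤ T) :
    ∫⁻ s in Ico 0 (J * h), G ⌊min s T / h⌋₊ = ∑ j ∈ Finset.range J, ENNReal.ofReal h * G j := by
  induction J with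
  | zero => simp
  | succ J ih =>
    push_cast at hJ
    have hJ' : J * h ≤ T := by nlinarith
    rw [Finset.sum_range_succ, ← ih hJ']
    have e : Ico (0:ℝ) ((J + 1 : ℕ) * h) = Ico 0 (J * h) ∪ Ico (J * h) ((J + 1 : ℕ) * h) := by
      rw [Ico_union_Ico_eq_Ico (by positivity)]
      push_cast; nlinarith
    rw [e, lintegral_union measurableSet_Ico]
    · congr 1
      have : ∫⁻ s in Ico ((J:ℝ) * h) ((J + 1 : ℕ) * h), G ⌊min s T / h⌋₊ = ∫⁻ s in Ico ((J:ℝ) * h) ((J + 1 : ℕ) * h), G J := by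
        apply setLIntegral_congr_fun measurableSet_Ico
        intro s hs
        dsimp only
        push_cast at hs
        congr 1
        rw [min_eq_left (hs.2.le.trans hJ), Nat.floor_eq_iff (div_nonneg (le_trans (by positivity) hs.1) h0.le)]
        rw [le_div_iff₀ h0, div_lt_iff₀ h0]
        exact hs
      rw [this, setLIntegral_const, Real.volume_Ico, mul_comm]
      congr 2
      push_cast; ring
    · rw [Set.disjoint_left]; intro x hx hx'
      exact absurd hx.2 (not_lt.2 hx'.1)

lemma cur_weak (H : Hyp K φ) (P : Par φ μ₀ a T P0 P2) (hN : 0 ≤ N) (h0 : 0 < h)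
    (hh : 2 * h * (N * (1 / (a - 2 * P2 * T)) * P0) ≤ 1)
    {t : ℝ} (ht : 0 ≤ t) (htT : t ≤ T) {f : ℝ → ℝ≥0∞} (hf : Measurable f) (hf1 : ∀ x, f x ≤ 1) :
    ∃ r r' : ℝ≥0∞, r ≤ ENNReal.ofReal h * Lc φ a T P2 ∧ r' ≤ ENNReal.ofReal h * Lc φ a T P2 ∧
    ∫⁻ x, f x ∂(cur K φ N h μ₀ T t) + (∫⁻ s in Ioc 0 t,
      ∫⁻ x, ∫⁻ y, FF (KnE K φ N) (lossG f) x y ∂(cur K φ N h μ₀ T s) ∂(cur K φ N h μ₀ T s)) + r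
    = ∫⁻ x, f x ∂μ₀ + (∫⁻ s in Ioc 0 t,
      ∫⁻ x, ∫⁻ y, FF (KnE K φ N) (gainG f) x y ∂(cur K φ N h μ₀ T s) ∂(cur K φ N h μ₀ T s)) + r' := by
  set J := ⌊min t T / h⌋₊ with hJ
  have hJT : J * h ≤ T := floor_le' P.hT h0 t
  have hJt : J * h ≤ t := by
    rw [hJ, min_eq_left htT]
    have := Nat.floor_le (div_nonneg ht h0.le)
    rwa [le_div_iff₀ h0] at this
  have hJt2 : t - J * h ≤ h := by
    rw [hJ, min_eq_left htT]
    have f2 := Nat.lt_floor_add_one (t / h)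
    rw [div_lt_iff₀ h0] at f2
    nlinarith
  set E := euler K φ N (ENNReal.ofReal h) μ₀ with hE
  set Gn : (ℝ × ℝ → ℝ≥0∞) → ℕ → ℝ≥0∞ := fun g j => ∫⁻ x, ∫⁻ y, FF (KnE K φ N) g x y ∂(E j) ∂(E j) with hGn
  have disc : ∀ J' : ℕ, J' * h ≤ T → ∫⁻ x, f x ∂(E J') + ∑ j ∈ Finset.range J', ENNReal.ofReal h * Gn (lossG f) j
      = ∫⁻ x, f x ∂μ₀ + ∑ j ∈ Finset.range J', ENNReal.ofReal h * Gn (gainG f) j := by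
    intro J'
    induction J' with
    | zero => intro _; simp [hE, euler]
    | succ j ih =>
      intro hj
      push_cast at hj
      have hj' : j * h ≤ T := by nlinarith
      have e := euler_weak H P hN h0 hh j hj' hf
      rw [Finset.sum_range_succ, Finset.sum_range_succ, ← add_assoc (∫⁻ x, f x ∂μ₀), ← ih hj']
      calc _ = (∫⁻ x, f x ∂(E (j+1)) + ENNReal.ofReal h * Gn (lossG f) j) + ∑ j ∈ Finset.range j, ENNReal.ofReal h * Gn (lossG f) j := by ring
        _ = (∫⁻ x, f x ∂(E j) + ENNReal.ofReal h * Gn (gainG f) j) + ∑ j ∈ Finset.range j, ENNReal.ofReal h * Gn (lossG f) j := by rw [e]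
        _ = _ := by ring
  have spl : ∀ g, ∫⁻ s in Ioc 0 t, Gn g ⌊min s T / h⌋₊ = ∑ j ∈ Finset.range J, ENNReal.ofReal h * Gn g j
      + ∫⁻ s in Ico (J * h) t, Gn g ⌊min s T / h⌋₊ := by
    intro g
    rw [setLIntegral_congr (Ico_ae_eq_Ioc (a := (0:ℝ)) (b := t)).symm, ← Ico_union_Ico_eq_Ico (by positivity) hJt,
      lintegral_union measurableSet_Ico, sum_int h0 _ J hJT]
    rw [Set.disjoint_left]; intro x hx hx'
    exact absurd hx.2 (not_lt.2 hx'.1)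
  have rem : ∀ g : ℝ × ℝ → ℝ≥0∞, (∀ p, g p ≤ 2) → ∫⁻ s in Ico (J * h) t, Gn g ⌊min s T / h⌋₊ ≤ ENNReal.ofReal h * Lc φ a T P2 := by
    intro g hg
    calc _ ≤ ∫⁻ s in Ico (J * h) t, Lc φ a T P2 := by
          apply lintegral_mono; intro s
          exact FFint_le H (KnE_le (φ := φ) N) hg _ (euler_bound' H P hN h0 hh _ (floor_le' P.hT h0 s))
      _ ≤ _ := by
          rw [setLIntegral_const, Real.volume_Ico, mul_comm]
          gcongr
  refine ⟨∫⁻ s in Ico (J * h) t, Gn (gainG f) ⌊min s T / h⌋₊, ∫⁻ s in Ico (J * h) t, Gn (lossG f) ⌊min s T / h⌋₊,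
    rem _ (gainG_le hf1), rem _ (lossG_le hf1), ?_⟩
  have s1 := spl (lossG f)
  have s2 := spl (gainG f)
  have d := disc J hJT
  show ∫⁻ x, f x ∂(E J) + (∫⁻ s in Ioc 0 t, Gn (lossG f) ⌊min s T / h⌋₊) + _ = _ + (∫⁻ s in Ioc 0 t, Gn (gainG f) ⌊min s T / h⌋₊) + _
  rw [s1, s2, ← add_assoc, ← add_assoc, d]
  ring

end
end CG

namespace CG
open ProbabilityTheory

lemma scalar_lip {U : Ultrafilter ℕ} {h : ℕ → ℝ} (hh : Tendsto h U (𝓝 0)) {C : ℝ≥0∞}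
    (hC : C ≠ ∞) {Gn : ℕ → ℝ → ℝ≥0∞} {G : ℝ → ℝ≥0∞}
    (hlip : ∀ n s s', Gn n s ≤ Gn n s' + ENNReal.ofReal (|s - s'| + h n) * C)
    (hG : ∀ s, Tendsto (fun n => Gn n s) U (𝓝 (G s))) (s s' : ℝ) :
    G s ≤ G s' + ENNReal.ofReal |s - s'| * C := by
  refine le_of_tendsto_of_tendsto (hG s) ((hG s').add (ENNReal.Tendsto.mul_const ?_ (Or.inr hC)))
    (Eventually.of_forall fun n => hlip n s s')
  have := (tendsto_const_nhds (x := |s - s'|)).add hh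
  rw [add_zero] at this
  exact ENNReal.tendsto_ofReal this

lemma scalar_unif {U : Ultrafilter ℕ} {h : ℕ → ℝ} (hh : Tendsto h U (𝓝 0)) (T : ℝ) {C : ℝ≥0∞}
    (hC : C ≠ ∞) {Gn : ℕ → ℝ → ℝ≥0∞} {G : ℝ → ℝ≥0∞}
    (hlip : ∀ n s s', Gn n s ≤ Gn n s' + ENNReal.ofReal (|s - s'| + h n) * C)
    (hG : ∀ s, Tendsto (fun n => Gn n s) U (𝓝 (G s))) (hfin : ∀ s, G s ≠ ∞) (ε : ℝ≥0∞) (hε : ε ≠ 0) :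
    ∀ᶠ n in U, ∀ s ∈ Icc 0 T, Gn n s ≤ G s + ε ∧ G s ≤ Gn n s + ε := by
  have hε3 : ε / 3 ≠ 0 := (ENNReal.div_pos hε (by simp)).ne'
  obtain ⟨δ, hδ, hδC⟩ := ENNReal.exists_nnreal_pos_mul_lt hC hε3
  have hδ2 : (0:ℝ) < δ / 2 := by have : (0:ℝ) < δ := by exact_mod_cast hδ
                                 positivity
  obtain ⟨I, hI, hIf, hIc⟩ := finite_cover_balls_of_compact (isCompact_Icc (a := (0:ℝ)) (b := T)) hδ2
  have e1 : ∀ᶠ n in U, ∀ x ∈ I, Gn n x ∈ Icc (G x - ε / 3) (G x + ε / 3) := by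
    rw [eventually_all_finite hIf]
    intro x _
    exact (ENNReal.tendsto_nhds (hfin x)).1 (hG x) _ (pos_iff_ne_zero.2 hε3)
  have e2 : ∀ᶠ n in U, h n < δ / 2 := hh.eventually_lt_const hδ2
  have gl := scalar_lip hh hC hlip hG
  filter_upwards [e1, e2] with n h1 h2
  intro s hs
  obtain ⟨x, hx, hsx⟩ := mem_iUnion₂.1 (hIc hs)
  rw [Metric.mem_ball, Real.dist_eq] at hsx
  have b1 : ∀ r : ℝ, r ≤ δ → ENNReal.ofReal r * C ≤ ε / 3 := by
    intro r hr
    refine le_trans ?_ hδC.le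
    gcongr
    rw [ENNReal.ofReal_le_iff_le_toReal ENNReal.coe_ne_top]; exact hr
  have hxs : |x - s| < δ / 2 := by rwa [abs_sub_comm]
  have hdd : (0:ℝ) ≤ δ := δ.2
  constructor
  · calc Gn n s ≤ Gn n x + ε / 3 := (hlip n s x).trans (by gcongr; exact b1 _ (by linarith))
      _ ≤ (G x + ε / 3) + ε / 3 := by gcongr; exact (h1 x hx).2
      _ ≤ (G s + ε / 3 + ε / 3) + ε / 3 := by
          gcongr; exact (gl x s).trans (by gcongr; exact b1 _ (by linarith))
      _ = G s + (ε / 3 + ε / 3 + ε / 3) := by ring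
      _ = _ := by rw [ENNReal.add_thirds]
  · calc G s ≤ G x + ε / 3 := (gl s x).trans (by gcongr; exact b1 _ (by linarith))
      _ ≤ (Gn n x + ε / 3) + ε / 3 := by gcongr; exact tsub_le_iff_right.1 (h1 x hx).1
      _ ≤ (Gn n s + ε / 3 + ε / 3) + ε / 3 := by
          gcongr; exact (hlip n x s).trans (by gcongr; exact b1 _ (by linarith))
      _ = Gn n s + (ε / 3 + ε / 3 + ε / 3) := by ring
      _ = _ := by rw [ENNReal.add_thirds]

lemma scalar_int {U : Ultrafilter ℕ} {h : ℕ → ℝ} (hh : Tendsto h U (𝓝 0)) (t : ℝ) {C : ℝ≥0∞}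
    (hC : C ≠ ∞) {Gn : ℕ → ℝ → ℝ≥0∞} {G : ℝ → ℝ≥0∞}
    (hlip : ∀ n s s', Gn n s ≤ Gn n s' + ENNReal.ofReal (|s - s'| + h n) * C)
    (hG : ∀ s, Tendsto (fun n => Gn n s) U (𝓝 (G s))) {B : ℝ≥0∞} (hB : B ≠ ∞) (hfin : ∀ s, G s ≤ B)
    {I : Set ℝ} (hI : I ⊆ Ioc 0 t) (hIm : MeasurableSet I) :
    Tendsto (fun n => ∫⁻ s in I, Gn n s) U (𝓝 (∫⁻ s in I, G s)) := by
  have hIv : volume I ≤ ENNReal.ofReal t := by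
    refine (measure_mono hI).trans ?_
    rw [Real.volume_Ioc, sub_zero]
  have hIt : volume I ≠ ∞ := ne_top_of_le_ne_top ENNReal.ofReal_ne_top hIv
  have f : ∫⁻ s in I, G s ≠ ∞ := by
    refine ne_top_of_le_ne_top (b := B * volume I) (by finiteness) ?_
    rw [← setLIntegral_const]
    exact lintegral_mono hfin
  rw [ENNReal.tendsto_nhds f]
  intro ε hε
  obtain ⟨δ, hδ, hδC⟩ := ENNReal.exists_nnreal_pos_mul_lt hIt hε.ne'
  have hδ0 : (δ : ℝ≥0∞) ≠ 0 := by simpa using hδ.ne'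
  filter_upwards [scalar_unif hh t hC hlip hG (fun s => ne_top_of_le_ne_top hB (hfin s)) δ hδ0] with n hn
  have key : ∀ A B : ℝ → ℝ≥0∞, (∀ s ∈ Icc 0 t, A s ≤ B s + δ) → ∫⁻ s in I, A s ≤ (∫⁻ s in I, B s) + ε := by
    intro A B hAB
    calc _ ≤ ∫⁻ s in I, (B s + δ) := by
          apply setLIntegral_mono' hIm
          intro s hs; exact hAB s ⟨(hI hs).1.le, (hI hs).2⟩
      _ = (∫⁻ s in I, B s) + δ * volume I := by
          rw [lintegral_add_right _ measurable_const, setLIntegral_const]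
      _ ≤ _ := by gcongr
  exact ⟨tsub_le_iff_right.2 (key _ _ fun s hs => (hn s hs).2), key _ _ fun s hs => (hn s hs).1⟩

structure Appr (M L : ℝ≥0∞) (h : ℕ → ℝ) (μ : ℕ → ℝ → Measure ℝ) : Prop where
  Mt : M ≠ ∞
  Lt : L ≠ ∞
  meas : ∀ n, Measurable (μ n)
  bd : ∀ n s, ∫⁻ x, w x ∂(μ n s) ≤ M
  ui : ∀ ε : ℝ≥0∞, ε ≠ 0 → ∃ C : ℝ≥0∞, C ≠ ∞ ∧ ∀ n s A, MeasurableSet A → ∫⁻ x in A, w x ∂(μ n s) ≤ ε + C * nu A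
  lip : ∀ n s s' A, MeasurableSet A → μ n s A ≤ μ n s' A + ENNReal.ofReal (|s - s'| + h n) * L
  hlim : Tendsto h atTop (𝓝 0)

/-- `m` is the limit of the curves `μ n` -/
def IsLim (U : Ultrafilter ℕ) (μ : ℕ → ℝ → Measure ℝ) (m : ℝ → Measure ℝ) : Prop :=
  ∀ s, ∀ g : ℝ → ℝ≥0∞, Measurable g → ∀ C : ℝ≥0∞, C ≠ ∞ → (∀ x, g x ≤ C * w x) →
      Tendsto (fun n => ∫⁻ x, g x ∂(μ n s)) U (𝓝 (∫⁻ x, g x ∂(m s)))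

section
variable {M L : ℝ≥0∞} {h : ℕ → ℝ} {μ : ℕ → ℝ → Measure ℝ} {U : Ultrafilter ℕ} {m : ℝ → Measure ℝ}

lemma exists_isLim (A : Appr M L h μ) (U : Ultrafilter ℕ) : ∃ m, IsLim U μ m := by
  have : ∀ s, ∃ q : Measure ℝ, ∀ g : ℝ → ℝ≥0∞, Measurable g → ∀ C : ℝ≥0∞, C ≠ ∞ → (∀ x, g x ≤ C * w x) →
      Tendsto (fun n => ∫⁻ x, g x ∂(μ n s)) U (𝓝 (∫⁻ x, g x ∂q)) := by
    intro s
    refine lemmaU U nu (fun n => μ n s) w_meas w_ne_zero w_ne_top ?_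
    intro ε hε
    obtain ⟨C, hC, h⟩ := A.ui ε hε
    refine ⟨C, hC, fun n B hB => ?_⟩
    rw [withDensity_apply _ hB]
    exact h n s B hB
  choose m hm using this
  exact ⟨m, hm⟩

lemma IsLim.apply (hm : IsLim U μ m) (s : ℝ) {B : Set ℝ} (hB : MeasurableSet B) :
    Tendsto (fun n => μ n s B) U (𝓝 (m s B)) := by
  have := hm s (B.indicator 1) (measurable_one.indicator hB) 1 (by simp) (fun x => by
    rw [one_mul]
    exact (indicator_le_self' (fun _ _ => zero_le) x).trans (w_ge_one x))
  simpa only [lintegral_indicator_one hB] using this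

lemma IsLim.bd (A : Appr M L h μ) (hm : IsLim U μ m) (s : ℝ) : ∫⁻ x, w x ∂(m s) ≤ M :=
  le_of_tendsto (hm s w w_meas 1 (by simp) (fun x => by simp)) (Eventually.of_forall fun n => A.bd n s)

lemma univ_le (ρ : Measure ℝ) : ρ univ ≤ ∫⁻ x, w x ∂ρ := by
  rw [← lintegral_one]; exact lintegral_mono w_ge_one

lemma set_le {ρ : Measure ℝ} (h : ∫⁻ x, w x ∂ρ ≤ M) (B : Set ℝ) : ρ B ≤ M :=
  (measure_mono (subset_univ _)).trans ((univ_le ρ).trans h)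

lemma IsLim.lip (A : Appr M L h μ) (hU : (U : Filter ℕ) ≤ atTop) (hm : IsLim U μ m) (s s' : ℝ) {B : Set ℝ} (hB : MeasurableSet B) :
    m s B ≤ m s' B + ENNReal.ofReal |s - s'| * L :=
  scalar_lip (A.hlim.mono_left hU) A.Lt (fun n s s' => A.lip n s s' B hB) (fun s => hm.apply s hB) s s'

lemma IsLim.ac (A : Appr M L h μ) (hm : IsLim U μ m) (s : ℝ) : m s ≪ nu := by
  refine Measure.AbsolutelyContinuous.mk fun B hB h0 => ?_
  rw [← le_zero_iff]
  refine le_of_forall_gt fun ε hε => ?_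
  obtain ⟨δ, hδ, hδε⟩ := exists_between hε
  obtain ⟨C, hC, h⟩ := A.ui δ hδ.ne'
  refine lt_of_le_of_lt ?_ hδε
  refine le_of_tendsto (hm.apply s hB) (Eventually.of_forall fun n => ?_)
  have := h n s B hB
  rw [h0, mul_zero, add_zero] at this
  refine le_trans ?_ this
  rw [← setLIntegral_one]
  exact lintegral_mono w_ge_one

lemma IsLim.meas (A : Appr M L h μ) (hU : (U : Filter ℕ) ≤ atTop) (hm : IsLim U μ m) : Measurable m := by
  refine Measure.measurable_of_measurable_coe _ fun B hB => ?_
  have hf : ∀ s, m s B ≠ ∞ := fun s => ne_top_of_le_ne_top A.Mt (set_le (hm.bd A s) B)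
  have : LipschitzWith L.toNNReal (fun s => (m s B).toReal) := by
    apply LipschitzWith.of_le_add_mul
    intro s s'
    have := hm.lip A hU s s' hB
    have h2 := ENNReal.toReal_mono (by have := hf s'; have := A.Lt; finiteness) this
    rw [ENNReal.toReal_add (hf s') (by have := A.Lt; finiteness), ENNReal.toReal_mul,
      ENNReal.toReal_ofReal (abs_nonneg _)] at h2
    rw [Real.dist_eq, mul_comm]
    exact h2
  have h2 := this.continuous.measurable.ennreal_ofReal
  convert h2 using 2 with s
  rw [ENNReal.ofReal_toReal (hf s)]

/-- time-space measure -/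
def Pi3 (μ : ℝ → Measure ℝ) (hμ : Measurable μ) (t : ℝ) : Measure (ℝ × ℝ × ℝ) :=
  (volume.restrict (Ioc 0 t)) ⊗ₘ ((⟨μ, hμ⟩ : Kernel ℝ ℝ) ×ₖ (⟨μ, hμ⟩ : Kernel ℝ ℝ))

lemma finKer {μ : ℝ → Measure ℝ} (hμ : Measurable μ) (hM : M ≠ ∞) (hb : ∀ s, ∫⁻ x, w x ∂(μ s) ≤ M) :
    IsFiniteKernel (⟨μ, hμ⟩ : Kernel ℝ ℝ) :=
  ⟨⟨M, hM.lt_top, fun s => set_le (hb s) _⟩⟩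

lemma lint_Pi3 {μ : ℝ → Measure ℝ} (hμ : Measurable μ) (hM : M ≠ ∞) (hb : ∀ s, ∫⁻ x, w x ∂(μ s) ≤ M)
    (t : ℝ) {g : ℝ × ℝ × ℝ → ℝ≥0∞} (hg : Measurable g) :
    ∫⁻ p, g p ∂(Pi3 μ hμ t) = ∫⁻ s in Ioc 0 t, ∫⁻ x, ∫⁻ y, g (s, x, y) ∂(μ s) ∂(μ s) := by
  have := finKer hμ hM hb
  unfold Pi3
  rw [Measure.lintegral_compProd hg]
  congr 1; ext s
  rw [Kernel.lintegral_prod _ _ _ (by fun_prop)]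
  rfl

lemma ui2 (ρ : Measure ℝ) [SFinite ρ] {ε ε' C C' : ℝ≥0∞} (hρ : ρ univ ≤ M)
    (h1 : ∀ A, MeasurableSet A → ρ A ≤ ε + C * nu A)
    (h2 : ∀ A, MeasurableSet A → ρ A ≤ ε' + C' * nu A) (B : Set (ℝ × ℝ)) (hB : MeasurableSet B) :
    (ρ.prod ρ) B ≤ ε * M + C * (ε' * nu univ) + C * C' * (nu.prod nu) B := by
  have mB : Measurable (fun x => nu (Prod.mk x ⁻¹' B)) := measurable_measure_prodMk_left hB
  rw [Measure.prod_apply hB]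
  calc _ ≤ ∫⁻ x, (ε + C * nu (Prod.mk x ⁻¹' B)) ∂ρ := by
        gcongr with x; exact h1 _ (measurable_prodMk_left hB)
    _ = ε * ρ univ + C * (ρ.prod nu) B := by
        rw [lintegral_add_left measurable_const, lintegral_const, lintegral_const_mul _ mB, Measure.prod_apply hB]
    _ ≤ ε * M + C * (ε' * nu univ + C' * (nu.prod nu) B) := by
        gcongr
        rw [Measure.prod_apply_symm hB, Measure.prod_apply_symm hB, ← lintegral_const, ← lintegral_const_mul, ← lintegral_add_left measurable_const]
        · gcongr with y
          exact h2 _ (measurable_prodMk_right hB)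
        · exact measurable_measure_prodMk_right hB
    _ = _ := by ring
end
end CG

namespace CG
open ProbabilityTheory

section
variable {M L : ℝ≥0∞} {h : ℕ → ℝ} {μ : ℕ → ℝ → Measure ℝ} {U : Ultrafilter ℕ} {m : ℝ → Measure ℝ}

def W3 (p : ℝ × ℝ × ℝ) : ℝ≥0∞ := w p.2.1 * w p.2.2
lemma W3_meas : Measurable W3 := by have := w_meas; unfold W3; fun_prop

lemma finM {ρ : Measure ℝ} (hM : M ≠ ∞) (hb : ∫⁻ x, w x ∂ρ ≤ M) : IsFiniteMeasure ρ :=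
  ⟨(set_le hb _).trans_lt hM.lt_top⟩

lemma prod_wd (ρ : Measure ℝ) [IsFiniteMeasure ρ] (B : Set (ℝ × ℝ)) (hB : MeasurableSet B) :
    ((ρ.withDensity w).prod (ρ.withDensity w)) B = ∫⁻ x, ∫⁻ y, B.indicator (fun q => w q.1 * w q.2) (x, y) ∂ρ ∂ρ := by
  have wm := w_meas
  rw [prod_withDensity wm wm, withDensity_apply _ hB, ← lintegral_indicator hB, lintegral_prod]
  exact (Measurable.indicator (by fun_prop) hB).aemeasurable

lemma ui3 (A : Appr M L h μ) (t : ℝ) :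
    UI ((volume.restrict (Ioc 0 t)).prod (nu.prod nu)) (fun n => (Pi3 (μ n) (A.meas n) t).withDensity W3) := by
  have wm := w_meas
  have hM := A.Mt
  intro ε hε
  set τ := ENNReal.ofReal t with hτ
  have hε2 : ε / 2 ≠ 0 := (ENNReal.half_pos hε).ne'
  obtain ⟨δ, hδ, hδε⟩ := ENNReal.exists_nnreal_pos_mul_lt (a := M * τ) (by finiteness) hε2
  obtain ⟨C, hC, h1⟩ := A.ui δ (by simpa using hδ.ne')
  obtain ⟨δ', hδ', hδε'⟩ := ENNReal.exists_nnreal_pos_mul_lt (a := C * nu univ * τ) (by finiteness) hε2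
  obtain ⟨C', hC', h2⟩ := A.ui δ' (by simpa using hδ'.ne')
  refine ⟨C * C', by finiteness, fun n B hB => ?_⟩
  have hvol : volume.restrict (Ioc 0 t) univ = τ := by
    rw [Measure.restrict_apply_univ, Real.volume_Ioc, sub_zero]
  rw [withDensity_apply _ hB, ← lintegral_indicator hB, lint_Pi3 (A.meas n) hM (A.bd n) t (W3_meas.indicator hB)]
  calc _ ≤ ∫⁻ s in Ioc 0 t, ((δ * M + C * (δ' * nu univ)) + C * C' * (nu.prod nu) (Prod.mk s ⁻¹' B)) := by
        gcongr with s
        have := finM hM (A.bd n s)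
        have hBs : MeasurableSet (Prod.mk s ⁻¹' B) := measurable_prodMk_left hB
        have e := prod_wd (μ n s) (Prod.mk s ⁻¹' B) hBs
        have : ∫⁻ x, ∫⁻ y, B.indicator W3 (s, x, y) ∂(μ n s) ∂(μ n s) = (((μ n s).withDensity w).prod ((μ n s).withDensity w)) (Prod.mk s ⁻¹' B) := by
          rw [e]; rfl
        rw [this]
        refine ui2 _ ?_ ?_ ?_ _ hBs
        · rw [withDensity_apply _ MeasurableSet.univ, Measure.restrict_univ]; exact A.bd n s
        · intro D hD; rw [withDensity_apply _ hD]; exact h1 n s D hD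
        · intro D hD; rw [withDensity_apply _ hD]; exact h2 n s D hD
    _ = (δ * M + C * (δ' * nu univ)) * τ + C * C' * ((volume.restrict (Ioc 0 t)).prod (nu.prod nu)) B := by
        rw [lintegral_add_left measurable_const, lintegral_const, hvol, lintegral_const_mul _ (measurable_measure_prodMk_left hB),
          Measure.prod_apply hB]
    _ = δ * (M * τ) + δ' * (C * nu univ * τ) + C * C' * ((volume.restrict (Ioc 0 t)).prod (nu.prod nu)) B := by ring
    _ ≤ ε / 2 + ε / 2 + C * C' * ((volume.restrict (Ioc 0 t)).prod (nu.prod nu)) B := by gcongr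
    _ = _ := by rw [ENNReal.add_halves]

lemma lint_rect {μ : ℝ → Measure ℝ} (hμ : Measurable μ) (hM : M ≠ ∞) (hb : ∀ s, ∫⁻ x, w x ∂(μ s) ≤ M)
    (t : ℝ) {I A B : Set ℝ} (hI : MeasurableSet I) (hA : MeasurableSet A) (hB : MeasurableSet B) :
    Pi3 μ hμ t (I ×ˢ A ×ˢ B) = ∫⁻ s in I ∩ Ioc 0 t, μ s A * μ s B := by
  have := finKer hμ hM hb
  unfold Pi3
  rw [Measure.compProd_apply_prod hI (hA.prod hB), Measure.restrict_restrict hI]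
  congr 1; ext s
  rw [Kernel.prod_apply, Measure.prod_prod]
  rfl

lemma limit3 (A : Appr M L h μ) (hU : (U : Filter ℕ) ≤ atTop) (hm : IsLim U μ m) (t : ℝ)
    {g : ℝ × ℝ × ℝ → ℝ≥0∞} (hg : Measurable g) {C : ℝ≥0∞} (hC : C ≠ ∞) (hgC : ∀ p, g p ≤ C * W3 p) :
    Tendsto (fun n => ∫⁻ s in Ioc 0 t, ∫⁻ x, ∫⁻ y, g (s, x, y) ∂(μ n s) ∂(μ n s)) U
      (𝓝 (∫⁻ s in Ioc 0 t, ∫⁻ x, ∫⁻ y, g (s, x, y) ∂(m s) ∂(m s))) := by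
  have hM := A.Mt
  have hmm := hm.meas A hU
  have hmb := hm.bd A
  obtain ⟨q, hq⟩ := lemmaU U _ (fun n => Pi3 (μ n) (A.meas n) t) W3_meas
    (fun p => mul_ne_zero (w_ne_zero _) (w_ne_zero _)) (fun p => ENNReal.mul_ne_top (w_ne_top _) (w_ne_top _)) (ui3 A t)
  have key : Pi3 m hmm t = q := by
    have := finKer hmm hM hmb
    have : IsFiniteMeasure (Pi3 m hmm t) := by unfold Pi3; infer_instance
    refine Measure.ext_prod₃ fun {I B D} hI hB hD => ?_
    have l1 : Tendsto (fun n => Pi3 (μ n) (A.meas n) t (I ×ˢ B ×ˢ D)) U (𝓝 (q (I ×ˢ B ×ˢ D))) := by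
      have hR := hI.prod (hB.prod hD)
      have := hq ((I ×ˢ B ×ˢ D).indicator 1) (measurable_one.indicator hR) 1 (by simp) (fun p => by
        rw [one_mul]
        exact (indicator_le_self' (fun _ _ => zero_le) p).trans (one_le_mul (w_ge_one _) (w_ge_one _)))
      simpa only [lintegral_indicator_one hR] using this
    simp_rw [fun n => lint_rect (A.meas n) hM (A.bd n) t hI hB hD] at l1
    have l2 : Tendsto (fun n => ∫⁻ s in I ∩ Ioc 0 t, μ n s B * μ n s D) U (𝓝 (∫⁻ s in I ∩ Ioc 0 t, m s B * m s D)) := by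
      refine scalar_int (A.hlim.mono_left hU) t (C := 2 * M * L) (by have := A.Lt; finiteness) ?_ ?_ (B := M * M) (by finiteness) ?_
        inter_subset_right (hI.inter measurableSet_Ioc)
      · intro n s s'
        set e := ENNReal.ofReal (|s - s'| + h n) * L with he
        calc μ n s B * μ n s D ≤ (μ n s' B + e) * μ n s D := by gcongr; exact A.lip n s s' B hB
          _ = μ n s' B * μ n s D + e * μ n s D := by ring
          _ ≤ μ n s' B * (μ n s' D + e) + e * M := by
              gcongr
              · exact A.lip n s s' D hD
              · exact set_le (A.bd n s) _
          _ = μ n s' B * μ n s' D + (μ n s' B * e + e * M) := by ring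
          _ ≤ μ n s' B * μ n s' D + (M * e + e * M) := by gcongr; exact set_le (A.bd n s') _
          _ = _ := by rw [he]; ring
      · intro s
        exact ENNReal.Tendsto.mul (hm.apply s hB) (Or.inr (ne_top_of_le_ne_top hM (set_le (hmb s) _)))
          (hm.apply s hD) (Or.inr (ne_top_of_le_ne_top hM (set_le (hmb s) _)))
      · intro s
        gcongr <;> exact set_le (hmb s) _
    rw [lint_rect hmm hM hmb t hI hB hD]
    exact tendsto_nhds_unique l2 l1
  have := hq g hg C hC hgC
  rw [← key, lint_Pi3 hmm hM hmb t hg] at this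
  refine Tendsto.congr (fun n => ?_) this
  rw [lint_Pi3 (A.meas n) hM (A.bd n) t hg]

end
end CG

namespace CG
open ProbabilityTheory

section
variable {M L : ℝ≥0∞} {h : ℕ → ℝ} {μ : ℕ → ℝ → Measure ℝ} {U : Ultrafilter ℕ} {m : ℝ → Measure ℝ}
  {K : ℝ → ℝ → ℝ → ℝ} {φ : ℝ → ℝ}

def KE (K : ℝ → ℝ → ℝ → ℝ) (x y z : ℝ) : ℝ≥0∞ := ENNReal.ofReal (K x y z)

lemma KE_meas (H : Hyp K φ) : Measurable (fun p : ℝ × ℝ × ℝ => KE K p.1 p.2.1 p.2.2) :=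
  H.Kmeas.ennreal_ofReal

lemma tail_meas (n : ℕ) : MeasurableSet {x : ℝ | (n : ℝ) < 1 + x ^ 2} :=
  measurableSet_lt measurable_const (by fun_prop)

lemma nu_tail : Tendsto (fun n : ℕ => nu {x : ℝ | (n : ℝ) < 1 + x ^ 2}) atTop (𝓝 0) := by
  have : (0 : ℝ≥0∞) = nu (⋂ n : ℕ, {x : ℝ | (n : ℝ) < 1 + x ^ 2}) := by
    have : (⋂ n : ℕ, {x : ℝ | (n : ℝ) < 1 + x ^ 2}) = ∅ := by
      rw [eq_empty_iff_forall_notMem]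
      intro x hx
      rw [mem_iInter] at hx
      obtain ⟨n, hn⟩ := exists_nat_gt (1 + x ^ 2)
      exact lt_asymm hn (hx n)
    rw [this]; simp
  rw [this]
  apply tendsto_measure_iInter_atTop
  · intro n; exact (tail_meas n).nullMeasurableSet
  · intro i j hij x hx
    have : (i : ℝ) ≤ j := by exact_mod_cast hij
    exact lt_of_le_of_lt this hx
  · exact ⟨0, measure_ne_top _ _⟩

lemma FF_trunc (H : Hyp K φ) (n : ℕ) {g : ℝ × ℝ → ℝ≥0∞} (hg2 : ∀ p, g p ≤ 2) (x y : ℝ) :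
    FF (KE K) g x y ≤ FF (KnE K φ n) g x y +
      2 * Phi0 φ * ({x : ℝ | (n : ℝ) < 1 + x ^ 2}.indicator w x * w y) := by
  by_cases hx : (n : ℝ) < 1 + x ^ 2
  · rw [indicator_of_mem (by exact hx)]
    exact (FF_le H (fun _ _ _ => le_rfl) hg2 x y).trans le_add_self
  · refine le_trans (le_of_eq ?_) le_self_add
    unfold FF
    refine lintegral_congr_ae (ae_zeta fun z hz => ?_)
    dsimp only
    rw [KnE_eq H hz (not_lt.1 hx)]; rfl

lemma trunc_tendsto (H : Hyp K φ) (A : Appr M L h μ) (hU : (U : Filter ℕ) ≤ atTop) (hm : IsLim U μ m)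
    (hΦ : Phi0 φ ≠ ∞) (t : ℝ) {g : ℝ × ℝ → ℝ≥0∞} (hg : Measurable g) (hg2 : ∀ p, g p ≤ 2) :
    Tendsto (fun n : ℕ => ∫⁻ s in Ioc 0 t, ∫⁻ x, ∫⁻ y, FF (KnE K φ n) g x y ∂(μ n s) ∂(μ n s)) U
      (𝓝 (∫⁻ s in Ioc 0 t, ∫⁻ x, ∫⁻ y, FF (KE K) g x y ∂(m s) ∂(m s))) := by
  have wm := w_meas
  have hM := A.Mt
  have Fm := FF_meas (KE_meas H) hg
  have hb : Tendsto (fun n : ℕ => ∫⁻ s in Ioc 0 t, ∫⁻ x, ∫⁻ y, FF (KE K) g x y ∂(μ n s) ∂(μ n s)) U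
      (𝓝 (∫⁻ s in Ioc 0 t, ∫⁻ x, ∫⁻ y, FF (KE K) g x y ∂(m s) ∂(m s))) :=
    limit3 A hU hm t (g := fun p => FF (KE K) g p.2.1 p.2.2) (Fm.comp measurable_snd) (C := 2 * Phi0 φ)
      (by finiteness) (fun p => FF_le H (fun _ _ _ => le_rfl) hg2 _ _)
  set e : ℕ → ℝ≥0∞ := fun n => ∫⁻ s in Ioc 0 t, ∫⁻ x, ∫⁻ y,
    2 * Phi0 φ * ({x : ℝ | (n : ℝ) < 1 + x ^ 2}.indicator w x * w y) ∂(μ n s) ∂(μ n s) with he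
  have hae : ∀ n : ℕ, ∫⁻ s in Ioc 0 t, ∫⁻ x, ∫⁻ y, FF (KnE K φ n) g x y ∂(μ n s) ∂(μ n s) ≤
      ∫⁻ s in Ioc 0 t, ∫⁻ x, ∫⁻ y, FF (KE K) g x y ∂(μ n s) ∂(μ n s) := by
    intro n
    gcongr with s x y
    unfold FF
    gcongr with z
    exact KnE_le _ _ _ _
  have hbe : ∀ n : ℕ, (∫⁻ s in Ioc 0 t, ∫⁻ x, ∫⁻ y, FF (KE K) g x y ∂(μ n s) ∂(μ n s)) ≤
      (∫⁻ s in Ioc 0 t, ∫⁻ x, ∫⁻ y, FF (KnE K φ n) g x y ∂(μ n s) ∂(μ n s)) + e n := by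
    intro n
    have Fn := FF_meas (KnE_meas H n) hg
    have t1 := lint_Pi3 (A.meas n) hM (A.bd n) t (g := fun p => FF (KE K) g p.2.1 p.2.2) (Fm.comp measurable_snd)
    have t2 := lint_Pi3 (A.meas n) hM (A.bd n) t (g := fun p => FF (KnE K φ n) g p.2.1 p.2.2) (Fn.comp measurable_snd)
    have im : Measurable ({x : ℝ | (n : ℝ) < 1 + x ^ 2}.indicator w) := wm.indicator (tail_meas n)
    have t3 := lint_Pi3 (A.meas n) hM (A.bd n) t (g := fun p => 2 * Phi0 φ * ({x : ℝ | (n : ℝ) < 1 + x ^ 2}.indicator w p.2.1 * w p.2.2))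
      (by fun_prop)
    rw [← t1, ← t2, he]
    dsimp only
    have Fn2 : Measurable (fun p : ℝ × ℝ × ℝ => FF (KnE K φ n) g p.2.1 p.2.2) := Fn.comp measurable_snd
    rw [← t3, ← lintegral_add_left Fn2]
    exact lintegral_mono fun p => FF_trunc H n hg2 _ _
  have he0 : Tendsto e U (𝓝 0) := by
    refine Tendsto.mono_left ?_ hU
    rw [ENNReal.tendsto_nhds_zero]
    intro ε hε
    set B := 2 * Phi0 φ * M * ENNReal.ofReal t with hB
    obtain ⟨δ, hδ, hδε⟩ := ENNReal.exists_nnreal_pos_mul_lt (a := B) (by rw [hB]; finiteness) hε.ne'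
    have hδ0 : (δ : ℝ≥0∞) ≠ 0 := by simpa using hδ.ne'
    obtain ⟨C, hC, h1⟩ := A.ui (δ / 2) (ENNReal.half_pos hδ0).ne'
    have := ENNReal.Tendsto.const_mul (a := C) nu_tail (Or.inr hC)
    rw [mul_zero] at this
    filter_upwards [this.eventually_le_const (ENNReal.half_pos hδ0)] with n hn
    have hs : ∀ s, ∫⁻ x, ∫⁻ y, 2 * Phi0 φ * ({x : ℝ | (n : ℝ) < 1 + x ^ 2}.indicator w x * w y) ∂(μ n s) ∂(μ n s)
        ≤ 2 * Phi0 φ * (δ * M) := by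
      intro s
      have im : Measurable ({x : ℝ | (n : ℝ) < 1 + x ^ 2}.indicator w) := wm.indicator (tail_meas n)
      calc _ = 2 * Phi0 φ * ((∫⁻ x in {x : ℝ | (n : ℝ) < 1 + x ^ 2}, w x ∂(μ n s)) * ∫⁻ y, w y ∂(μ n s)) := by
            rw [← lintegral_indicator (tail_meas n), ← lintegral_mul_const _ im, ← lintegral_const_mul _ (by fun_prop)]
            congr 1; ext x
            rw [← lintegral_const_mul _ wm, ← lintegral_const_mul _ (by fun_prop)]
        _ ≤ 2 * Phi0 φ * ((δ / 2 + δ / 2) * M) := by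
            gcongr
            · refine (h1 n s _ (tail_meas n)).trans ?_
              gcongr
            · exact A.bd n s
        _ = _ := by rw [ENNReal.add_halves]
    calc e n ≤ ∫⁻ s in Ioc 0 t, 2 * Phi0 φ * (δ * M) := lintegral_mono hs
      _ = 2 * Phi0 φ * (δ * M) * ENNReal.ofReal t := by rw [setLIntegral_const, Real.volume_Ioc, sub_zero]
      _ = δ * B := by rw [hB]; ring
      _ ≤ ε := hδε.le
  refine tendsto_of_tendsto_of_tendsto_of_le_of_le (f := fun n : ℕ => _) ?_ hb (fun n => tsub_le_iff_right.2 (hbe n)) hae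
  have := ENNReal.Tendsto.sub hb he0 (Or.inr (by simp))
  rwa [tsub_zero] at this

/-- the limit object -/
structure Sol (K : ℝ → ℝ → ℝ → ℝ) (μ₀ : Measure ℝ) (a T P2 : ℝ) (L : ℝ≥0∞) (m : ℝ → Measure ℝ) : Prop where
  Lt : L ≠ ∞
  meas : Measurable m
  bd : ∀ s, ∫⁻ x, w x ∂(m s) ≤ Mc a T P2
  ac : ∀ s, m s ≪ nu
  supp : ∀ s, m s (Iio 0) = 0
  mass : ∀ s, m s univ = μ₀ univ
  first : ∀ s, ∫⁻ x, ENNReal.ofReal x ∂(m s) = ∫⁻ x, ENNReal.ofReal x ∂μ₀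
  mom : ∀ s, 0 ≤ s → s ≤ T → ∫⁻ x, w x ∂(m s) ≤ ENNReal.ofReal (1 / (a - 2 * P2 * s))
  lip : ∀ s s', ∀ f : ℝ → ℝ≥0∞, Measurable f → (∀ x, f x ≤ 1) →
    ∫⁻ x, f x ∂(m s) ≤ ∫⁻ x, f x ∂(m s') + ENNReal.ofReal |s - s'| * L
  weak : ∀ t, 0 ≤ t → t ≤ T → ∀ f : ℝ → ℝ≥0∞, Measurable f → (∀ x, f x ≤ 1) →
    ∫⁻ x, f x ∂(m t) + (∫⁻ s in Ioc 0 t, ∫⁻ x, ∫⁻ y, FF (KE K) (lossG f) x y ∂(m s) ∂(m s)) =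
    ∫⁻ x, f x ∂μ₀ + (∫⁻ s in Ioc 0 t, ∫⁻ x, ∫⁻ y, FF (KE K) (gainG f) x y ∂(m s) ∂(m s))
  Finite : ∀ t, ∀ g : ℝ × ℝ → ℝ≥0∞, (∀ p, g p ≤ 2) →
    ∫⁻ s in Ioc 0 t, ∫⁻ x, ∫⁻ y, FF (KE K) g x y ∂(m s) ∂(m s) ≠ ∞

lemma cur_clamp {μ₀ : Measure ℝ} {N h T : ℝ} (hT : 0 < T) (h0 : 0 < h) (s : ℝ) :
    cur K φ N h μ₀ T s = cur K φ N h μ₀ T (max 0 (min s T)) := by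
  unfold cur
  congr 1
  have : min (max 0 (min s T)) T = max 0 (min s T) := min_eq_left (max_le hT.le (min_le_right _ _))
  rw [this]
  rcases le_total 0 (min s T) with h1 | h1
  · rw [max_eq_right h1]
  · rw [max_eq_left h1, zero_div, Nat.floor_zero, Nat.floor_of_nonpos (div_nonpos_of_nonpos_of_nonneg h1 h0.le)]

lemma cur_lip' {μ₀ : Measure ℝ} [SFinite μ₀] {a T P0 P2 N h : ℝ}
    (H : Hyp K φ) (P : Par φ μ₀ a T P0 P2) (hN : 0 ≤ N) (h0 : 0 < h)
    (hh : 2 * h * (N * (1 / (a - 2 * P2 * T)) * P0) ≤ 1) (s s' : ℝ) {f : ℝ → ℝ≥0∞} (hf : Measurable f) (hf1 : ∀ x, f x ≤ 1) :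
    ∫⁻ x, f x ∂(cur K φ N h μ₀ T s) ≤ ∫⁻ x, f x ∂(cur K φ N h μ₀ T s') + ENNReal.ofReal (|s - s'| + h) * Lc φ a T P2 := by
  rw [cur_clamp P.hT h0 s, cur_clamp P.hT h0 s']
  have hd : |max 0 (min s T) - max 0 (min s' T)| ≤ |s - s'| := by
    calc _ ≤ |min s T - min s' T| := by
          rw [max_comm 0, max_comm 0]; exact abs_max_sub_max_le_abs _ _ _
      _ ≤ max |s - s'| |T - T| := abs_min_sub_min_le_max s T s' T
      _ = |s - s'| := by simp
  have b : ∀ s, 0 ≤ max 0 (min s T) ∧ max 0 (min s T) ≤ T := fun s =>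
    ⟨le_max_left _ _, max_le P.hT.le (min_le_right _ _)⟩
  rcases le_total (max 0 (min s T)) (max 0 (min s' T)) with hle | hle
  · refine (cur_lip H P hN h0 hh (b s).1 hle (b s').2 hf hf1).2.trans ?_
    gcongr
    rw [abs_sub_comm] at hd
    exact (le_abs_self _).trans hd
  · refine (cur_lip H P hN h0 hh (b s').1 hle (b s).2 hf hf1).1.trans ?_
    gcongr
    exact (le_abs_self _).trans hd

end
end CG

namespace CG
open ProbabilityTheory

section
variable {K : ℝ → ℝ → ℝ → ℝ} {φ : ℝ → ℝ} {a T P0 P2 N h : ℝ}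

lemma cur_meas {μ₀ : Measure ℝ} : Measurable (fun s => cur K φ N h μ₀ T s) := by
  unfold cur
  have h1 : Measurable (fun j : ℕ => euler K φ N (ENNReal.ofReal h) μ₀ j) := measurable_from_nat
  have h2 : Measurable (fun s : ℝ => ⌊min s T / h⌋₊) := Nat.measurable_floor.comp (by fun_prop)
  exact h1.comp h2

lemma cur_cons {μ₀ : Measure ℝ} [SFinite μ₀] (H : Hyp K φ) (P : Par φ μ₀ a T P0 P2) (hN : 0 ≤ N) (h0 : 0 < h)
    (hh : 2 * h * (N * (1 / (a - 2 * P2 * T)) * P0) ≤ 1) (s : ℝ) {f : ℝ → ℝ≥0∞} (hf : Measurable f)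
    (h1 : ∀ x z, 0 < z → z ≤ x → f (x + z) + f (x - z) = 2 * f x) :
    ∫⁻ x, f x ∂(cur K φ N h μ₀ T s) = ∫⁻ x, f x ∂μ₀ := by
  have hf' := floor_le' P.hT h0 s
  unfold cur
  rw [euler_eq_lin]
  refine lin_cons (J := ⌊min s T / h⌋₊) H.φmeas (hhE P hN h0 hh) (fun j hj => ?_) μ₀ hf h1 _ le_rfl
  refine euler_good H P hN h0 hh j (le_trans ?_ hf')
  gcongr

lemma cur_supp {μ₀ : Measure ℝ} [SFinite μ₀] (H : Hyp K φ) (P : Par φ μ₀ a T P0 P2) (hN : 0 ≤ N) (h0 : 0 < h)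
    (hh : 2 * h * (N * (1 / (a - 2 * P2 * T)) * P0) ≤ 1) (s : ℝ) (hs : μ₀ (Iio 0) = 0) :
    cur K φ N h μ₀ T s (Iio 0) = 0 := by
  have hf' := floor_le' P.hT h0 s
  unfold cur
  rw [euler_eq_lin]
  refine lin_supp (J := ⌊min s T / h⌋₊) H.φmeas (hhE P hN h0 hh) (fun j hj => ?_) μ₀ hs _ le_rfl
  refine euler_good H P hN h0 hh j (le_trans ?_ hf')
  gcongr

theorem exists_sol {d : ℝ → ℝ≥0∞} (hd : Measurable d) (hdt : ∀ x, d x ≠ ∞)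
    (H : Hyp K φ) (P : Par φ (zeta.withDensity d) a T P0 P2) :
    ∃ m, Sol K (zeta.withDensity d) a T P2 (Lc φ a T P2) m := by
  have hP0 := P.P0n
  have hdd := P.hd
  set B := P0 * (1 / (a - 2 * P2 * T)) + 1 with hB
  have hB0 : 0 < B := by positivity
  set h : ℕ → ℝ := fun n => 1 / (2 * ((n : ℝ) + 1) * B) with hh_def
  have h0 : ∀ n, 0 < h n := fun n => by rw [hh_def]; positivity
  have hn0 : ∀ n : ℕ, (0:ℝ) ≤ n := fun n => by positivity
  have hh : ∀ n : ℕ, 2 * h n * ((n : ℝ) * (1 / (a - 2 * P2 * T)) * P0) ≤ 1 := by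
    intro n
    have e : 2 * h n * ((n : ℝ) * (1 / (a - 2 * P2 * T)) * P0) = ((n : ℝ) * (B - 1)) / (((n : ℝ) + 1) * B) := by
      rw [hh_def, show (n : ℝ) * (1 / (a - 2 * P2 * T)) * P0 = n * (B - 1) by rw [hB]; ring]
      field_simp
    rw [e, div_le_one (by positivity)]
    nlinarith [hn0 n]
  have hlim : Tendsto h atTop (𝓝 0) := by
    have := (tendsto_one_div_add_atTop_nhds_zero_nat (𝕜 := ℝ)).mul_const (1 / (2 * B))
    rw [zero_mul] at this
    refine this.congr fun n => ?_
    rw [hh_def]; field_simp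
  set μ : ℕ → ℝ → Measure ℝ := fun n s => cur K φ n (h n) (zeta.withDensity d) T s with hμ
  have hMt : Mc a T P2 ≠ ∞ := by unfold Mc; finiteness
  have hPt : Phi0 φ ≠ ∞ := by rw [P.hP0]; finiteness
  have hLt : Lc φ a T P2 ≠ ∞ := by unfold Lc; finiteness
  have A : Appr (Mc a T P2) (Lc φ a T P2) h μ :=
    { Mt := hMt
      Lt := hLt
      meas := fun n => cur_meas
      bd := fun n s => euler_bound' H P (hn0 n) (h0 n) (hh n) _ (floor_le' P.hT (h0 n) s)
      ui := by
        intro ε hε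
        obtain ⟨C, hC, h1⟩ := euler_UI hd hdt H P ε hε
        exact ⟨C, hC, fun n s A hA => h1 n (h n) (hn0 n) (h0 n) (hh n) _ (floor_le' P.hT (h0 n) s) A hA⟩
      lip := by
        intro n s s' A hA
        have := cur_lip' H P (hn0 n) (h0 n) (hh n) s s' (measurable_one.indicator hA)
          (fun x => indicator_le_self' (fun _ _ => zero_le) x)
        rwa [lintegral_indicator_one hA, lintegral_indicator_one hA] at this
      hlim := hlim }
  obtain ⟨U, hU⟩ : ∃ U : Ultrafilter ℕ, (U : Filter ℕ) ≤ atTop := ⟨_, Nat.hyperfilter_le_atTop⟩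
  obtain ⟨m, hm⟩ := exists_isLim A U
  have hsupp0 : (zeta.withDensity d) (Iio 0) = 0 := by
    apply withDensity_absolutelyContinuous
    unfold zeta
    rw [Measure.restrict_apply measurableSet_Iio]
    have : Iio (0:ℝ) ∩ Ioi 0 = ∅ := by
      ext x; simp only [mem_inter_iff, mem_Iio, mem_Ioi, mem_empty_iff_false, iff_false, not_and, not_lt]
      intro h; exact h.le
    rw [this, measure_empty]
  have hsupp : ∀ s, m s (Iio 0) = 0 := fun s => by
    refine tendsto_nhds_unique (hm.apply s measurableSet_Iio) ?_
    refine tendsto_const_nhds.congr fun n => ?_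
    rw [hμ]
    exact (cur_supp H P (hn0 n) (h0 n) (hh n) s hsupp0).symm
  have hcons : ∀ s, ∀ f : ℝ → ℝ≥0∞, Measurable f → (∀ x, f x ≤ w x) →
      (∀ x z, 0 < z → z ≤ x → f (x + z) + f (x - z) = 2 * f x) →
      ∫⁻ x, f x ∂(m s) = ∫⁻ x, f x ∂(zeta.withDensity d) := by
    intro s f hf hfw h1
    refine tendsto_nhds_unique (hm s f hf 1 (by simp) (by simpa using hfw)) ?_
    refine tendsto_const_nhds.congr fun n => ?_
    rw [hμ]
    exact (cur_cons H P (hn0 n) (h0 n) (hh n) s hf h1).symm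
  refine ⟨m, ⟨hLt, hm.meas A hU, fun s => hm.bd A s, hm.ac A, hsupp, fun s => ?_, fun s => ?_, fun s hs hsT => ?_,
    fun s s' f hf hf1 => ?_, fun t ht htT f hf hf1 => ?_, fun t g hg2 => ?_⟩⟩
  · have := hcons s 1 measurable_one w_ge_one (fun x z _ _ => by simp [one_add_one_eq_two])
    simpa using this
  · refine hcons s (fun x => ENNReal.ofReal x) ENNReal.measurable_ofReal (fun x => ?_) (fun x z hz hx => ?_)
    · apply ENNReal.ofReal_le_ofReal; nlinarith [sq_nonneg (x - 1)]
    · rw [← ENNReal.ofReal_add (by linarith) (by linarith), show x + z + (x - z) = 2 * x by ring,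
        ENNReal.ofReal_mul (by norm_num)]; simp
  · refine le_of_tendsto (hm s w w_meas 1 (by simp) (fun x => by simp)) (Eventually.of_forall fun n => ?_)
    have hj := floor_le' P.hT (h0 n) s
    have hjs : (⌊min s T / h n⌋₊ : ℝ) * h n ≤ s := by
      rw [min_eq_left hsT, ← le_div_iff₀ (h0 n)]
      exact Nat.floor_le (div_nonneg hs (h0 n).le)
    refine (euler_bound H P (hn0 n) (h0 n) (hh n) _ hj).trans (ENNReal.ofReal_le_ofReal ?_)
    have hP2 := P.P2n
    have : P2 * s ≤ P2 * T := by gcongr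
    have h3 : 0 < a - 2 * P2 * s := by nlinarith
    gcongr
  · exact scalar_lip (hlim.mono_left hU) hLt (fun n s s' => cur_lip' H P (hn0 n) (h0 n) (hh n) s s' hf hf1)
      (fun s => hm s f hf 1 (by simp) (fun x => by rw [one_mul]; exact (hf1 x).trans (w_ge_one x))) s s'
  · have l1 := trunc_tendsto H A hU hm hPt t (lossG_meas hf) (lossG_le hf1)
    have l2 := trunc_tendsto H A hU hm hPt t (gainG_meas hf) (gainG_le hf1)
    have l3 := hm t f hf 1 (by simp) (fun x => by rw [one_mul]; exact (hf1 x).trans (w_ge_one x))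
    choose r r' hr hr' e using fun n : ℕ => cur_weak H P (hn0 n) (h0 n) (hh n) ht htT hf hf1
    have z0 : Tendsto (fun n => ENNReal.ofReal (h n) * Lc φ a T P2) U (𝓝 0) := by
      have := ENNReal.Tendsto.mul_const (b := Lc φ a T P2) (ENNReal.tendsto_ofReal (hlim.mono_left hU)) (Or.inr hLt)
      simpa using this
    have z1 : Tendsto r U (𝓝 0) := tendsto_of_tendsto_of_tendsto_of_le_of_le tendsto_const_nhds z0 (fun _ => zero_le) hr
    have z2 : Tendsto r' U (𝓝 0) := tendsto_of_tendsto_of_tendsto_of_le_of_le tendsto_const_nhds z0 (fun _ => zero_le) hr'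
    have s1 := (l3.add l1).add z1
    have s2 := ((tendsto_const_nhds (x := ∫⁻ x, f x ∂(zeta.withDensity d))).add l2).add z2
    rw [add_zero] at s1 s2
    refine tendsto_nhds_unique s1 (s2.congr fun n => (e n).symm)
  · refine ne_top_of_le_ne_top (b := 2 * Phi0 φ * (Mc a T P2 * Mc a T P2) * ENNReal.ofReal t) (by finiteness) ?_
    calc _ ≤ ∫⁻ s in Ioc 0 t, 2 * Phi0 φ * (Mc a T P2 * Mc a T P2) :=
          lintegral_mono fun s => FFint_le H (fun _ _ _ => le_rfl) hg2 _ (hm.bd A s)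
      _ = _ := by rw [setLIntegral_const, Real.volume_Ioc, sub_zero]

end
end CG

namespace CG
open ProbabilityTheory

section
variable {K : ℝ → ℝ → ℝ → ℝ} {φ : ℝ → ℝ} {a T P0 P2 : ℝ} {L : ℝ≥0∞} {μ₀ : Measure ℝ} {m : ℝ → Measure ℝ}

lemma exists_density (S : Sol K μ₀ a T P2 L m) : ∃ c : ℝ → ℝ → ℝ, Measurable (fun p : ℝ × ℝ => c p.1 p.2) ∧
    (∀ s x, 0 ≤ c s x) ∧ ∀ s, m s = zeta.withDensity (fun x => ENNReal.ofReal (c s x)) := by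
  have hMt : Mc a T P2 ≠ ∞ := by unfold Mc; finiteness
  have := finKer S.meas hMt S.bd
  set κ : Kernel ℝ ℝ := ⟨m, S.meas⟩ with hκ
  set D := κ.rnDeriv (Kernel.const ℝ nu) with hD
  have Dm : Measurable (fun p : ℝ × ℝ => D p.1 p.2) := Kernel.measurable_rnDeriv _ _
  have wm := w_meas
  have hms : ∀ s, m s = volume.withDensity (fun x => (w x)⁻¹ * D s x) := by
    intro s
    have h1 := Kernel.withDensity_rnDeriv_eq (κ := κ) (η := Kernel.const ℝ nu) (a := s) (S.ac s)
    rw [Kernel.withDensity_apply _ (Kernel.measurable_rnDeriv _ _)] at h1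
    have h2 : m s = nu.withDensity (D s) := h1.symm
    rw [h2]
    unfold nu
    rw [← withDensity_mul _ (by fun_prop) (by fun_prop)]
    rfl
  refine ⟨fun s x => ((w x)⁻¹ * D s x).toReal, by fun_prop, fun s x => ENNReal.toReal_nonneg, fun s => ?_⟩
  have h0 : m s (Iic 0) = 0 := by
    rw [← Iio_union_right, measure_union_null_iff]
    refine ⟨S.supp s, S.ac s ?_⟩
    unfold nu
    exact withDensity_absolutelyContinuous _ _ (by simp)
  have h1 : m s = (m s).restrict (Ioi 0) := by
    rw [Measure.restrict_eq_self_of_ae_mem]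
    rw [ae_iff]
    convert h0 using 2
    ext x; simp
  have hfin : ∀ᵐ x ∂(volume : Measure ℝ), (w x)⁻¹ * D s x < ∞ := by
    apply ae_lt_top (by fun_prop)
    have h2 := set_le (S.bd s) univ
    rw [hms s, withDensity_apply _ MeasurableSet.univ, Measure.restrict_univ] at h2
    exact ne_top_of_le_ne_top hMt h2
  rw [h1]
  conv_lhs => rw [hms s]
  rw [restrict_withDensity measurableSet_Ioi]
  unfold zeta
  apply withDensity_congr_ae
  filter_upwards [ae_restrict_of_ae hfin] with x hx
  rw [ENNReal.ofReal_toReal hx.ne]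

lemma conv_lint {c : ℝ → ℝ} (hc : Measurable c) {g : ℝ → ℝ} (hg : Measurable g) (hg0 : ∀ x, 0 < x → 0 ≤ g x) :
    ∫⁻ x, ENNReal.ofReal (g x) ∂(zeta.withDensity (fun x => ENNReal.ofReal (c x))) =
      ∫⁻ x, ENNReal.ofReal (g x * c x) ∂zeta := by
  rw [lintegral_withDensity_eq_lintegral_mul _ (by fun_prop) (by fun_prop)]
  refine lintegral_congr_ae (ae_zeta fun x hx => ?_)
  simp only [Pi.mul_apply]
  rw [ENNReal.ofReal_mul (hg0 x hx), mul_comm]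

lemma conv_int {c : ℝ → ℝ} (hc : Measurable c) (hc0 : ∀ᵐ x ∂zeta, 0 ≤ c x)
    {g : ℝ → ℝ} (hg : Measurable g) (hg0 : ∀ x, 0 < x → 0 ≤ g x) :
    ∫ x in Ioi (0:ℝ), g x * c x =
      (∫⁻ x, ENNReal.ofReal (g x) ∂(zeta.withDensity (fun x => ENNReal.ofReal (c x)))).toReal := by
  rw [conv_lint hc hg hg0]
  refine integral_eq_lintegral_of_nonneg_ae ?_ (by fun_prop)
  filter_upwards [hc0, ae_zeta hg0] with x h1 h2 using mul_nonneg h2 h1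

lemma conv_integrable {c : ℝ → ℝ} (hc : Measurable c) (hc0 : ∀ᵐ x ∂zeta, 0 ≤ c x)
    {g : ℝ → ℝ} (hg : Measurable g) (hg0 : ∀ x, 0 < x → 0 ≤ g x)
    (hf : ∫⁻ x, ENNReal.ofReal (g x) ∂(zeta.withDensity (fun x => ENNReal.ofReal (c x))) ≠ ∞) :
    IntegrableOn (fun x => g x * c x) (Ioi 0) := by
  rw [conv_lint hc hg hg0] at hf
  refine (lintegral_ofReal_ne_top_iff_integrable (by fun_prop) ?_).1 hf
  filter_upwards [hc0, ae_zeta hg0] with x h1 h2 using mul_nonneg h2 h1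

/-- the product reference measure -/
def pim (t : ℝ) : Measure (ℝ × ℝ × ℝ × ℝ) :=
  (volume.restrict (Ioc 0 t)).prod (zeta.prod (zeta.prod zeta))

def Q3 : Set (ℝ × ℝ × ℝ) := Ioi 0 ×ˢ (Ioi 0 ×ˢ Ioi 0)

lemma pim_eq (t : ℝ) : pim t = volume.restrict (Ioc 0 t ×ˢ Q3) := by
  unfold pim zeta Q3
  rw [Measure.prod_restrict, Measure.prod_restrict, Measure.prod_restrict]
  rfl

/-- the collision density -/
def kk (K : ℝ → ℝ → ℝ → ℝ) (c : ℝ → ℝ → ℝ) (p : ℝ × ℝ × ℝ × ℝ) : ℝ :=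
  K p.2.1 p.2.2.1 p.2.2.2 * c p.1 p.2.1 * c p.1 p.2.2.1

lemma conv4 (H : Hyp K φ) {c : ℝ → ℝ → ℝ} (hc : Measurable (fun p : ℝ × ℝ => c p.1 p.2)) (hc0 : ∀ s x, 0 ≤ c s x)
    (hm : ∀ s, m s = zeta.withDensity (fun x => ENNReal.ofReal (c s x)))
    {g : ℝ × ℝ → ℝ≥0∞} (hg : Measurable g) (t : ℝ) :
    ∫⁻ s in Ioc 0 t, ∫⁻ x, ∫⁻ y, FF (KE K) g x y ∂(m s) ∂(m s) =
      ∫⁻ p, ENNReal.ofReal (kk K c p) * g (p.2.1, p.2.2.2) ∂(pim t) := by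
  have Km := H.Kmeas
  have Fm := FF_meas (KE_meas H) hg
  have hcs : ∀ s, Measurable (c s) := fun s => hc.comp (by fun_prop : Measurable fun x => (s, x))
  have c1 : Measurable (fun p : ℝ × ℝ × ℝ × ℝ => c p.1 p.2.1) := hc.comp (by fun_prop : Measurable fun p : ℝ × ℝ × ℝ × ℝ => (p.1, p.2.1))
  have c2 : Measurable (fun p : ℝ × ℝ × ℝ × ℝ => c p.1 p.2.2.1) := hc.comp (by fun_prop : Measurable fun p : ℝ × ℝ × ℝ × ℝ => (p.1, p.2.2.1))
  have k1 : Measurable (fun p : ℝ × ℝ × ℝ × ℝ => K p.2.1 p.2.2.1 p.2.2.2) := Km.comp measurable_snd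
  have kkm : Measurable (kk K c) := by unfold kk; fun_prop
  have Gm : Measurable (fun p : ℝ × ℝ × ℝ × ℝ => ENNReal.ofReal (kk K c p) * g (p.2.1, p.2.2.2)) := by fun_prop
  unfold pim
  rw [lintegral_prod _ Gm.aemeasurable]
  congr 1; ext s
  have Gs : Measurable (fun p : ℝ × ℝ × ℝ => ENNReal.ofReal (kk K c (s, p)) * g (p.1, p.2.2)) :=
    Gm.comp (measurable_prodMk_left : Measurable (Prod.mk s))
  rw [lintegral_prod _ Gs.aemeasurable]
  have hcsm := hcs s
  have F1 : Measurable (fun x => ∫⁻ y, FF (KE K) g x y ∂(m s)) := by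
    have : SFinite (m s) := by rw [hm]; infer_instance
    exact Measurable.lintegral_prod_right' (f := fun p : ℝ × ℝ => FF (KE K) g p.1 p.2) Fm
  have e1 : ∀ x, ∫⁻ y, FF (KE K) g x y ∂(m s) = ∫⁻ y, ENNReal.ofReal (c s y) * FF (KE K) g x y ∂zeta := by
    intro x
    have Fx : Measurable (fun y => FF (KE K) g x y) := Fm.comp (measurable_prodMk_left : Measurable (Prod.mk x))
    rw [hm, lintegral_withDensity_eq_lintegral_mul _ (by fun_prop) Fx]
    rfl
  conv_lhs => rw [hm s, lintegral_withDensity_eq_lintegral_mul _ (by fun_prop) (by simpa only [hm s] using F1)]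
  congr 1; ext x
  have Gx : Measurable (fun p : ℝ × ℝ => ENNReal.ofReal (kk K c (s, x, p)) * g (x, p.2)) :=
    Gs.comp (measurable_prodMk_left : Measurable (Prod.mk x))
  rw [lintegral_prod _ Gx.aemeasurable]
  simp only [Pi.mul_apply]
  rw [← hm s, e1, ← lintegral_const_mul _ (by
    have : Measurable (fun y => FF (KE K) g x y) := Fm.comp (measurable_prodMk_left : Measurable (Prod.mk x))
    fun_prop)]
  congr 1; ext y
  have g1 : Measurable (fun z => KE K x y z * g (x, z)) := by
    have : Measurable (fun z => KE K x y z) := (KE_meas H).comp (by fun_prop : Measurable fun z : ℝ => (x, y, z))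
    fun_prop
  unfold FF
  rw [← lintegral_const_mul _ g1, ← lintegral_const_mul _ (by fun_prop)]
  congr 1; ext z
  unfold kk KE
  rw [ENNReal.ofReal_mul (mul_nonneg (H.K0 _ _ _) (hc0 _ _)), ENNReal.ofReal_mul (H.K0 _ _ _)]
  ring

/-- real-valued collision facts on the product measure, moved to `D` -/
lemma toD (H : Hyp K φ) {c : ℝ → ℝ → ℝ} {t : ℝ} {u : ℝ × ℝ × ℝ × ℝ → ℝ}
    (hi : Integrable (fun p => u p * kk K c p) (pim t)) :
    IntegrableOn (fun p => u p * kk K c p) (Ioc 0 t ×ˢ Dcgedg) ∧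
    ∫ p in Ioc 0 t ×ˢ Dcgedg, u p * kk K c p = ∫ p, u p * kk K c p ∂(pim t) := by
  have Qm : MeasurableSet Q3 := measurableSet_Ioi.prod (measurableSet_Ioi.prod measurableSet_Ioi)
  have hQ : (Ici (0:ℝ) ×ˢ (Ici (0:ℝ) ×ˢ Ici (0:ℝ)) : Set (ℝ × ℝ × ℝ)) =ᵐ[volume] Q3 := by
    unfold Q3
    have e : Ici (0:ℝ) =ᵐ[volume] Ioi 0 := Ioi_ae_eq_Ici.symm
    exact Measure.set_prod_ae_eq e (Measure.set_prod_ae_eq e e)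
  have hD : (Dcgedg : Set (ℝ × ℝ × ℝ)) =ᵐ[volume] (Dcgedg ∩ Q3 : Set (ℝ × ℝ × ℝ)) := by
    have h1 : Dcgedg = Dcgedg ∩ (Ici (0:ℝ) ×ˢ (Ici (0:ℝ) ×ˢ Ici (0:ℝ)) : Set (ℝ × ℝ × ℝ)) := by
      rw [eq_comm, inter_eq_left]
      rintro ⟨x, y, z⟩ ⟨hx, hy, hz, _, _⟩
      exact ⟨hx, hy, hz⟩
    conv_lhs => rw [h1]
    exact (ae_eq_refl _).inter hQ
  have hS : (Ioc 0 t ×ˢ Dcgedg : Set (ℝ × ℝ × ℝ × ℝ)) =ᵐ[volume] (Ioc 0 t ×ˢ (Dcgedg ∩ Q3) : Set (ℝ × ℝ × ℝ × ℝ)) :=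
    Measure.set_prod_ae_eq (ae_eq_refl _) hD
  rw [pim_eq] at hi ⊢
  have sub : (Ioc 0 t ×ˢ (Dcgedg ∩ Q3) : Set (ℝ × ℝ × ℝ × ℝ)) ⊆ Ioc 0 t ×ˢ Q3 := prod_mono le_rfl inter_subset_right
  constructor
  · have : IntegrableOn (fun p => u p * kk K c p) (Ioc 0 t ×ˢ (Dcgedg ∩ Q3)) := IntegrableOn.mono_set hi sub
    exact this.congr_set_ae hS
  · rw [setIntegral_congr_set hS]
    symm
    apply setIntegral_eq_of_subset_of_forall_sdiff_eq_zero (measurableSet_Ioc.prod Qm) sub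
    rintro ⟨s, x, y, z⟩ ⟨⟨hs, hx, hy, hz⟩, hn⟩
    simp only [mem_Ioi] at hx hy hz
    have : x < z ∨ y < z := by
      by_contra! hcon
      exact hn ⟨hs, ⟨hx.le, hy.le, hz.le, hcon.1, hcon.2⟩, hx, hy, hz⟩
    have k0 : K x y z = 0 := by
      rcases this with h | h
      · exact H.van1 _ _ _ h
      · exact H.van2 _ _ _ h
    simp [kk, k0]

end
end CG

namespace CG
open ProbabilityTheory

lemma rp (x : ℝ) : x ^ (-(0:ℝ)) + x ^ (2:ℝ) = 1 + x ^ 2 := by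
  rw [neg_zero, Real.rpow_zero, Real.rpow_two]

section
variable {K : ℝ → ℝ → ℝ → ℝ} {φ : ℝ → ℝ} {a T P2 : ℝ} {L : ℝ≥0∞} {m : ℝ → Measure ℝ}
  {c₀ : ℝ → ℝ} {c : ℝ → ℝ → ℝ}

structure Den (c : ℝ → ℝ → ℝ) (m : ℝ → Measure ℝ) : Prop where
  meas : Measurable (fun p : ℝ × ℝ => c p.1 p.2)
  nn : ∀ s x, 0 ≤ c s x
  eq : ∀ s, m s = zeta.withDensity (fun x => ENNReal.ofReal (c s x))

lemma Den.meas1 (D : Den c m) (s : ℝ) : Measurable (c s) :=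
  D.meas.comp (by fun_prop : Measurable fun x => (s, x))

lemma Den.nn1 (D : Den c m) (s : ℝ) : ∀ᵐ x ∂zeta, 0 ≤ c s x := Eventually.of_forall (D.nn s)

lemma Den.int (D : Den c m) (s : ℝ) {g : ℝ → ℝ} (hg : Measurable g) (hg0 : ∀ x, 0 < x → 0 ≤ g x) :
    ∫ x in Ioi (0:ℝ), g x * c s x = (∫⁻ x, ENNReal.ofReal (g x) ∂(m s)).toReal := by
  rw [D.eq]; exact conv_int (D.meas1 s) (D.nn1 s) hg hg0

lemma Den.integrable (D : Den c m) (s : ℝ) {g : ℝ → ℝ} (hg : Measurable g) (hg0 : ∀ x, 0 < x → 0 ≤ g x)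
    (hf : ∫⁻ x, ENNReal.ofReal (g x) ∂(m s) ≠ ∞) :
    IntegrableOn (fun x => g x * c s x) (Ioi 0) := by
  rw [D.eq] at hf; exact conv_integrable (D.meas1 s) (D.nn1 s) hg hg0 hf

lemma kk_meas (H : Hyp K φ) (D : Den c m) : Measurable (kk K c) := by
  have hc := D.meas
  have c1 : Measurable (fun p : ℝ × ℝ × ℝ × ℝ => c p.1 p.2.1) := hc.comp (by fun_prop : Measurable fun p : ℝ × ℝ × ℝ × ℝ => (p.1, p.2.1))
  have c2 : Measurable (fun p : ℝ × ℝ × ℝ × ℝ => c p.1 p.2.2.1) := hc.comp (by fun_prop : Measurable fun p : ℝ × ℝ × ℝ × ℝ => (p.1, p.2.2.1))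
  have k1 : Measurable (fun p : ℝ × ℝ × ℝ × ℝ => K p.2.1 p.2.2.1 p.2.2.2) := H.Kmeas.comp measurable_snd
  exact (k1.mul c1).mul c2

lemma kk_nn (H : Hyp K φ) (D : Den c m) (p) : 0 ≤ kk K c p :=
  mul_nonneg (mul_nonneg (H.K0 _ _ _) (D.nn _ _)) (D.nn _ _)

lemma kk_int {μ₀ : Measure ℝ} (H : Hyp K φ) (S : Sol K μ₀ a T P2 L m) (D : Den c m) (t : ℝ) :
    Integrable (kk K c) (pim t) := by
  have h1 := S.Finite t 1 (fun _ => by norm_num)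
  rw [conv4 H D.meas D.nn D.eq measurable_one] at h1
  simp only [Pi.one_apply, mul_one] at h1
  exact (lintegral_ofReal_ne_top_iff_integrable (kk_meas H D).aestronglyMeasurable (Eventually.of_forall (kk_nn H D))).1 h1

lemma ukk_int {μ₀ : Measure ℝ} (H : Hyp K φ) (S : Sol K μ₀ a T P2 L m) (D : Den c m) (t : ℝ)
    {u : ℝ × ℝ × ℝ × ℝ → ℝ} (hu : Measurable u) {C : ℝ} (hC : ∀ p, |u p| ≤ C) :
    Integrable (fun p => u p * kk K c p) (pim t) :=
  (kk_int H S D t).bdd_mul hu.aestronglyMeasurable (Eventually.of_forall hC)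

lemma ukk_eq (H : Hyp K φ) (D : Den c m) (t : ℝ) {G : ℝ × ℝ → ℝ} (hG : Measurable G) (hG0 : ∀ p, 0 ≤ G p) :
    ∫ p, G (p.2.1, p.2.2.2) * kk K c p ∂(pim t) =
      (∫⁻ s in Ioc 0 t, ∫⁻ x, ∫⁻ y, FF (KE K) (fun p => ENNReal.ofReal (G p)) x y ∂(m s) ∂(m s)).toReal := by
  have km := kk_meas H D
  rw [conv4 H D.meas D.nn D.eq (by fun_prop)]
  rw [integral_eq_lintegral_of_nonneg_ae (Eventually.of_forall fun p => mul_nonneg (hG0 _) (kk_nn H D p))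
    (by fun_prop)]
  congr 2; ext p
  rw [ENNReal.ofReal_mul (hG0 _), mul_comm]

lemma weak01 (H : Hyp K φ) (hc₀ : Measurable c₀) (hc₀0 : ∀ᵐ x ∂zeta, 0 ≤ c₀ x)
    (hf₀ : (zeta.withDensity (fun x => ENNReal.ofReal (c₀ x))) univ ≠ ∞)
    (S : Sol K (zeta.withDensity (fun x => ENNReal.ofReal (c₀ x))) a T P2 L m) (D : Den c m)
    {t : ℝ} (ht : 0 ≤ t) (htT : t ≤ T) {g : ℝ → ℝ} (hg : Measurable g) (hg0 : ∀ x, 0 ≤ g x) (hg1 : ∀ x, g x ≤ 1) :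
    (∫ x in Ioi (0:ℝ), g x * c t x) + ∫ p, (2 * g p.2.1) * kk K c p ∂(pim t) =
    (∫ x in Ioi (0:ℝ), g x * c₀ x) + ∫ p, (g (p.2.1 + p.2.2.2) + g (p.2.1 - p.2.2.2)) * kk K c p ∂(pim t) := by
  set μ₀ := zeta.withDensity (fun x => ENNReal.ofReal (c₀ x)) with hμ₀
  have hMt : Mc a T P2 ≠ ∞ := by unfold Mc; finiteness
  set f : ℝ → ℝ≥0∞ := fun x => ENNReal.ofReal (g x) with hf
  have fm : Measurable f := by fun_prop
  have f1 : ∀ x, f x ≤ 1 := fun x => by rw [hf]; simpa using hg1 x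
  have W := S.weak t ht htT f fm f1
  have el : lossG f = fun p => ENNReal.ofReal (2 * g p.1) := by
    ext p; unfold lossG; rw [ENNReal.ofReal_mul (by norm_num)]; simp [hf]
  have eg : gainG f = fun p => ENNReal.ofReal (g (p.1 + p.2) + g (p.1 - p.2)) := by
    ext p; unfold gainG; rw [ENNReal.ofReal_add (hg0 _) (hg0 _)]
  have n1 := S.Finite t _ (lossG_le f1)
  have n2 := S.Finite t _ (gainG_le f1)
  have n3 : ∀ ρ : Measure ℝ, ρ univ ≠ ∞ → ∫⁻ x, f x ∂ρ ≠ ∞ := by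
    intro ρ hρ
    refine ne_top_of_le_ne_top hρ ?_
    rw [← lintegral_one]; exact lintegral_mono f1
  have n4 : m t univ ≠ ∞ := ne_top_of_le_ne_top hMt (set_le (S.bd t) _)
  have := congrArg ENNReal.toReal W
  rw [ENNReal.toReal_add (n3 _ n4) n1, ENNReal.toReal_add (n3 _ hf₀) n2, el, eg] at this
  rw [D.int t hg (fun x _ => hg0 x), conv_int hc₀ hc₀0 hg (fun x _ => hg0 x),
    ukk_eq H D t (G := fun p => 2 * g p.1) (by fun_prop) (fun p => by have := hg0 p.1; positivity),
    ukk_eq H D t (G := fun p => g (p.1 + p.2) + g (p.1 - p.2)) (by fun_prop) (fun p => add_nonneg (hg0 _) (hg0 _))]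
  exact this

theorem mkSol (H : Hyp K φ) (hc₀ : Measurable c₀) (hc₀0 : ∀ᵐ x ∂zeta, 0 ≤ c₀ x)
    (hf₀ : (zeta.withDensity (fun x => ENNReal.ofReal (c₀ x))) univ ≠ ∞)
    (S : Sol K (zeta.withDensity (fun x => ENNReal.ofReal (c₀ x))) a T P2 L m) (D : Den c m) (hT : 0 < T) :
    IsWeakSolution K 0 2 (ENNReal.ofReal T) c₀ c := by
  have hMt : Mc a T P2 ≠ ∞ := by unfold Mc; finiteness
  have wi : ∀ t, IntegrableOn (fun x => (1 + x ^ 2) * c t x) (Ioi 0) := fun t =>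
    D.integrable t (by fun_prop) (fun x _ => by positivity) (ne_top_of_le_ne_top hMt (S.bd t))
  have n4 : ∀ t, m t univ ≠ ∞ := fun t => ne_top_of_le_ne_top hMt (set_le (S.bd t) _)
  have i1 : ∀ t, IntegrableOn (fun x => 1 * c t x) (Ioi 0) := fun t =>
    D.integrable t (by fun_prop) (fun x _ => by positivity) (by simpa using n4 t)
  have i0 : IntegrableOn (fun x => 1 * c₀ x) (Ioi 0) :=
    conv_integrable hc₀ hc₀0 (by fun_prop) (fun x _ => by positivity) (by simpa using hf₀)
  simp only [one_mul] at i1 i0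
  have mass : ∀ t, ∫ x in Ioi (0:ℝ), c t x = ∫ x in Ioi (0:ℝ), c₀ x := by
    intro t
    have h1 := D.int t (g := fun _ => 1) (by fun_prop) (fun _ _ => by norm_num)
    have h2 := conv_int hc₀ hc₀0 (g := fun _ => 1) (by fun_prop) (fun _ _ => by norm_num)
    simp only [one_mul, ENNReal.ofReal_one, lintegral_one] at h1 h2
    rw [h1, h2, S.mass t]
  have key : ∀ f : ℝ → ℝ, BddMeas f → ∃ M : ℝ, 0 < M ∧ ∃ g : ℝ → ℝ, Measurable g ∧ (∀ x, 0 ≤ g x) ∧ (∀ x, g x ≤ 1) ∧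
      ∀ x, f x = 2 * M * g x - M := by
    rintro f ⟨fm, M, hM⟩
    refine ⟨|M| + 1, by positivity, fun x => (f x + (|M| + 1)) / (2 * (|M| + 1)), by fun_prop, fun x => ?_, fun x => ?_, fun x => ?_⟩
    · have := abs_le.1 (hM x); have := le_abs_self M
      apply div_nonneg <;> linarith
    · have := abs_le.1 (hM x); have := le_abs_self M
      rw [div_le_one (by positivity)]; linarith
    · field_simp; ring
  have ib : ∀ g : ℝ → ℝ, Measurable g → (∀ x, 0 ≤ g x) → (∀ x, g x ≤ 1) → ∀ u : ℝ → ℝ, IntegrableOn u (Ioi 0) →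
      IntegrableOn (fun x => g x * u x) (Ioi 0) := by
    intro g hg h0 h1 u hu
    refine Integrable.bdd_mul (c := 1) hu hg.aestronglyMeasurable (Eventually.of_forall fun x => ?_)
    rw [Real.norm_eq_abs, abs_of_nonneg (h0 x)]; exact h1 x
  refine ⟨fun t _ _ => ⟨⟨D.meas1 t, ?_⟩, D.nn1 t⟩, fun f hf => ?_, ⟨(Mc a T P2).toReal, fun t _ _ => ?_⟩, fun t ht htT => ?_, fun t ht htT f hf => ?_⟩
  · refine (wi t).congr (Eventually.of_forall fun x => ?_)
    dsimp only
    rw [rp, abs_of_nonneg (D.nn t x)]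
  · obtain ⟨M, hM, g, hg, hg0, hg1, hfg⟩ := key f hf
    have e : ∀ t, ∫ x in Ioi (0:ℝ), f x * c t x = 2 * M * (∫⁻ x, ENNReal.ofReal (g x) ∂(m t)).toReal - M * ∫ x in Ioi (0:ℝ), c₀ x := by
      intro t
      rw [← D.int t hg (fun x _ => hg0 x), ← mass t, ← integral_const_mul, ← integral_const_mul,
        ← integral_sub ((ib g hg hg0 hg1 _ (i1 t)).const_mul _) ((i1 t).const_mul _)]
      congr 1; ext x; rw [hfg]; ring
    simp_rw [e]
    have lip : LipschitzWith L.toNNReal (fun s => (∫⁻ x, ENNReal.ofReal (g x) ∂(m s)).toReal) := by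
      have f1 : ∀ x, ENNReal.ofReal (g x) ≤ 1 := fun x => by simpa using hg1 x
      have hfin : ∀ s, ∫⁻ x, ENNReal.ofReal (g x) ∂(m s) ≠ ∞ := by
        intro s
        refine ne_top_of_le_ne_top (n4 s) ?_
        rw [← lintegral_one]; exact lintegral_mono f1
      apply LipschitzWith.of_le_add_mul
      intro s s'
      have := S.lip s s' _ (by fun_prop : Measurable fun x => ENNReal.ofReal (g x)) f1
      have h2 := ENNReal.toReal_mono (by have := hfin s'; have := S.Lt; finiteness) this
      rw [ENNReal.toReal_add (hfin s') (by have := S.Lt; finiteness), ENNReal.toReal_mul,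
        ENNReal.toReal_ofReal (abs_nonneg _)] at h2
      rw [Real.dist_eq, mul_comm]
      exact h2
    exact ((continuous_const.mul lip.continuous).sub continuous_const).continuousOn
  · unfold Ynorm
    have h1 := D.int t (g := fun x => 1 + x ^ 2) (by fun_prop) (fun x _ => by positivity)
    have h2 : ∀ x, (x ^ (-(0:ℝ)) + x ^ (2:ℝ)) * |c t x| = (1 + x ^ 2) * c t x := fun x => by
      rw [rp, abs_of_nonneg (D.nn t x)]
    simp_rw [h2]
    rw [h1]
    exact ENNReal.toReal_mono hMt (S.bd t)
  · have := (toD H (c := c) (t := t) (u := fun _ => 1) (by simpa only [one_mul] using kk_int H S D t)).1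
    simp only [one_mul] at this
    exact this
  · have htT' : t ≤ T := ((ENNReal.ofReal_lt_ofReal_iff hT).1 htT).le
    obtain ⟨M, hM, g, hg, hg0, hg1, hfg⟩ := key f hf
    have W := weak01 H hc₀ hc₀0 hf₀ S D ht htT' hg hg0 hg1
    have ga : ∀ x, |g x| ≤ 1 := fun x => by rw [abs_of_nonneg (hg0 x)]; exact hg1 x
    have u1 : Integrable (fun p : ℝ × ℝ × ℝ × ℝ => (2 * g p.2.1) * kk K c p) (pim t) :=
      ukk_int H S D t (by fun_prop) (C := 2) (fun p => by
        rw [abs_of_nonneg (by have := hg0 p.2.1; positivity)]; linarith [hg1 p.2.1])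
    have u2 : Integrable (fun p : ℝ × ℝ × ℝ × ℝ => (g (p.2.1 + p.2.2.2) + g (p.2.1 - p.2.2.2)) * kk K c p) (pim t) :=
      ukk_int H S D t (by fun_prop) (C := 2) (fun p => by
        rw [abs_of_nonneg (add_nonneg (hg0 _) (hg0 _))]; linarith [hg1 (p.2.1 + p.2.2.2), hg1 (p.2.1 - p.2.2.2)])
    have e0 : ∀ p : ℝ × ℝ × ℝ × ℝ, dLap f p.2.2.2 p.2.1 * kk K c p =
        2 * M * ((g (p.2.1 + p.2.2.2) + g (p.2.1 - p.2.2.2)) * kk K c p - (2 * g p.2.1) * kk K c p) := by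
      intro p; unfold dLap; rw [hfg, hfg, hfg]; ring
    have u3 : Integrable (fun p : ℝ × ℝ × ℝ × ℝ => dLap f p.2.2.2 p.2.1 * kk K c p) (pim t) := by
      simp_rw [e0]; exact (u2.sub u1).const_mul _
    have r := (toD H (u := fun p => dLap f p.2.2.2 p.2.1) u3).2
    change _ = ∫ p in (Ioc (0:ℝ) t) ×ˢ Dcgedg, dLap f p.2.2.2 p.2.1 * kk K c p
    rw [r]
    simp_rw [e0]
    rw [integral_const_mul, integral_sub u2 u1]
    have e1 : ∫ x in Ioi (0:ℝ), f x * (c t x - c₀ x) = 2 * M * ((∫ x in Ioi (0:ℝ), g x * c t x) - ∫ x in Ioi (0:ℝ), g x * c₀ x)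
        - M * ((∫ x in Ioi (0:ℝ), c t x) - ∫ x in Ioi (0:ℝ), c₀ x) := by
      have j1 := ib g hg hg0 hg1 _ (i1 t)
      have j2 := ib g hg hg0 hg1 _ i0
      have j3 : Integrable (fun x => 2 * M * (g x * c t x - g x * c₀ x)) (volume.restrict (Ioi 0)) :=
        (Integrable.sub j1 j2).const_mul _
      have j4 : Integrable (fun x => M * (c t x - c₀ x)) (volume.restrict (Ioi 0)) :=
        (Integrable.sub (i1 t) i0).const_mul _
      rw [← integral_sub j1 j2, ← integral_sub (i1 t) i0, ← integral_const_mul, ← integral_const_mul,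
        ← integral_sub j3 j4]
      congr 1; ext x; rw [hfg]; ring
    rw [e1, mass t, sub_self, mul_zero, sub_zero]
    congr 1
    linarith

end
end CG

namespace CG
open ProbabilityTheory

lemma Y_w {c : ℝ → ℝ} (h : MemYplus 0 2 c) : Integrable (fun x => (1 + x ^ 2) * c x) zeta := by
  refine Integrable.congr h.1.2 ?_
  filter_upwards [h.2] with x hx
  rw [rp, abs_of_nonneg hx]

lemma Y_0 {c : ℝ → ℝ} (h : MemYplus 0 2 c) : Integrable c zeta := by
  refine (Y_w h).mono h.1.1.aestronglyMeasurable (Eventually.of_forall fun x => ?_)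
  rw [norm_mul]
  refine le_mul_of_one_le_left (norm_nonneg _) ?_
  rw [Real.norm_eq_abs, abs_of_nonneg (by positivity)]
  nlinarith [sq_nonneg x]

lemma Y_2 {c : ℝ → ℝ} (h : MemYplus 0 2 c) : Integrable (fun x => x ^ 2 * c x) zeta := by
  have : Integrable (fun x => (1 + x ^ 2) * c x - c x) zeta := (Y_w h).sub (Y_0 h)
  refine this.congr (Eventually.of_forall fun x => ?_)
  dsimp only; ring

lemma Mom_0 (c : ℝ → ℝ) : Mom 0 c = ∫ x, c x ∂zeta := by
  unfold Mom zeta; simp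

lemma Mom_1 (c : ℝ → ℝ) : Mom 1 c = ∫ x in Ioi (0:ℝ), x * c x := by
  unfold Mom; simp

lemma Mom_2 (c : ℝ → ℝ) : Mom 2 c = ∫ x, x ^ 2 * c x ∂zeta := by
  unfold Mom zeta; simp only [Real.rpow_two]

lemma Mom_02 {c : ℝ → ℝ} (h : MemYplus 0 2 c) : Mom 0 c + Mom 2 c = ∫ x, (1 + x ^ 2) * c x ∂zeta := by
  rw [Mom_0, Mom_2, ← integral_add (Y_0 h) (Y_2 h)]
  congr 1; ext x; ring

lemma Mom_0_pos {c : ℝ → ℝ} (h : MemYplus 0 2 c) (hne : ¬ c =ᵐ[volume.restrict (Ioi (0:ℝ))] 0) : 0 < Mom 0 c := by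
  rw [Mom_0]
  refine lt_of_le_of_ne (integral_nonneg_of_ae h.2) (fun h0 => hne ?_)
  exact (integral_eq_zero_iff_of_nonneg_ae h.2 (Y_0 h)).1 h0.symm

lemma Mom_2_nn {c : ℝ → ℝ} (h : MemYplus 0 2 c) : 0 ≤ Mom 2 c := by
  rw [Mom_2]
  refine integral_nonneg_of_ae ?_
  filter_upwards [h.2] with x hx using mul_nonneg (sq_nonneg x) hx

lemma phi_split (φ : ℝ → ℝ) (h : MemYplus 0 2 φ) : phiNorm 2 φ = Mom 0 φ + Mom 2 φ := by
  rw [Mom_02 h]; unfold phiNorm zeta; simp only [Real.rpow_two]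

theorem final
    (K : ℝ → ℝ → ℝ → ℝ) (φ : ℝ → ℝ) (hK : IsKernel K)
    (hφ : MemYplus 0 2 φ)
    (hbound : ∀ x y z : ℝ, 0 ≤ x → 0 ≤ y → 0 ≤ z →
      K x y z ≤ checkm x ^ (2:ℝ) * checkm y ^ (2:ℝ) * φ z)
    (hderiv : SecondDerivBound K 0 2 φ)
    (c₀ : ℝ → ℝ) (hc₀ : MemYplus 0 2 c₀)
    (hc₀ne : ¬ c₀ =ᵐ[volume.restrict (Ioi (0:ℝ))] 0) :
    ∃ c : ℝ → ℝ → ℝ,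
      IsWeakSolution K 0 2
        (ENNReal.ofReal ((2 * phiNorm 2 φ * (Mom 0 c₀ + Mom 2 c₀))⁻¹)) c₀ c ∧
      ∀ t : ℝ, 0 ≤ t →
        ENNReal.ofReal t <
          ENNReal.ofReal ((2 * phiNorm 2 φ * (Mom 0 c₀ + Mom 2 c₀))⁻¹) →
        Mom 0 (c t) = Mom 0 c₀ ∧ Mom 1 (c t) = Mom 1 c₀ ∧
        Mom 2 (c t) ≤ ((Mom 0 c₀ + Mom 2 c₀)⁻¹ - 2 * phiNorm 2 φ * t)⁻¹ - Mom 0 c₀ := by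
  by_cases hz : φ =ᵐ[volume.restrict (Ioi (0:ℝ))] 0
  · have h0 : phiNorm 2 φ = 0 := by
      unfold phiNorm
      refine integral_eq_zero_of_ae ?_
      filter_upwards [hz] with x hx
      rw [hx]; simp
    rw [h0]
    simp only [mul_zero, zero_mul, inv_zero, ENNReal.ofReal_zero]
    refine ⟨fun _ _ => 0, ⟨?_, ?_, ⟨0, ?_⟩, ?_, ?_⟩, ?_⟩
    · intro t _ h; exact absurd h not_lt_zero
    · intro f _ t ht; exact absurd ht.2 not_lt_zero
    · intro t _ h; exact absurd h not_lt_zero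
    · intro t _ h; exact absurd h not_lt_zero
    · intro t _ h; exact absurd h not_lt_zero
    · intro t _ h; exact absurd h not_lt_zero
  have H := mkHyp K φ hK hφ hbound hderiv
  have hP0 := Mom_0_pos hφ hz
  have hP2 := Mom_2_nn hφ
  have hM0 := Mom_0_pos hc₀ hc₀ne
  have hM2 := Mom_2_nn hc₀
  have hΦ := phi_split φ hφ
  have hMeq := Mom_02 hc₀
  set P0 := Mom 0 φ with eP0
  set P2 := Mom 2 φ with eP2
  set Φ := phiNorm 2 φ with eΦ
  set M := Mom 0 c₀ + Mom 2 c₀ with eM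
  have hM : 0 < M := by linarith
  have hΦ0 : 0 < Φ := by linarith
  set T := (2 * Φ * M)⁻¹ with eT
  have hT : 0 < T := by positivity
  have hΦT : 2 * Φ * T = M⁻¹ := by rw [eT]; field_simp
  have P : Par φ (zeta.withDensity (fun x => ENNReal.ofReal (c₀ x))) M⁻¹ T P0 P2 := by
    refine ⟨hP0.le, hP2, ?_, ?_, hT, ?_, ?_⟩
    · rw [eP0, Mom_0, ofReal_integral_eq_lintegral_ofReal (Y_0 hφ) hφ.2]; rfl
    · rw [eP2, Mom_2, ofReal_integral_eq_lintegral_ofReal (Y_2 hφ)]; · rfl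
      filter_upwards [hφ.2] with x hx using mul_nonneg (sq_nonneg x) hx
    · rw [← hΦT, hΦ]; nlinarith
    · refine le_of_eq ?_
      have e := conv_lint hc₀.1.1 (g := fun x => 1 + x ^ 2) (by fun_prop) (fun x _ => by positivity)
      have e2 := ofReal_integral_eq_lintegral_ofReal (Y_w hc₀) (by
        filter_upwards [hc₀.2] with x hx using mul_nonneg (by positivity) hx)
      rw [one_div, inv_inv, hMeq, e2, ← e]; rfl
  obtain ⟨m, S⟩ := exists_sol (by have := hc₀.1.1; fun_prop) (fun x => ENNReal.ofReal_ne_top) H P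
  obtain ⟨c, cm, cn, ce⟩ := exists_density S
  have D : Den c m := ⟨cm, cn, ce⟩
  have hf₀ : (zeta.withDensity (fun x => ENNReal.ofReal (c₀ x))) univ ≠ ∞ := by
    rw [withDensity_apply _ MeasurableSet.univ, Measure.restrict_univ]
    exact (Y_0 hc₀).lintegral_lt_top.ne
  have W := mkSol H hc₀.1.1 hc₀.2 hf₀ S D hT
  refine ⟨c, W, fun t ht htT => ?_⟩
  have hY := W.mem t ht htT
  have htT' : t < T := (ENNReal.ofReal_lt_ofReal_iff hT).1 htT
  have m0 : Mom 0 (c t) = Mom 0 c₀ := by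
    have h1 := D.int t (g := fun _ => 1) (by fun_prop) (fun _ _ => by norm_num)
    have h2 := conv_int hc₀.1.1 hc₀.2 (g := fun _ => 1) (by fun_prop) (fun _ _ => by norm_num)
    simp only [one_mul, ENNReal.ofReal_one, lintegral_one] at h1 h2
    rw [Mom_0, Mom_0]; unfold zeta; rw [h1, h2, S.mass t]
  have m1 : Mom 1 (c t) = Mom 1 c₀ := by
    have h1 := D.int t (g := fun x => x) (by fun_prop) (fun _ h => h.le)
    have h2 := conv_int hc₀.1.1 hc₀.2 (g := fun x => x) (by fun_prop) (fun _ h => h.le)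
    rw [Mom_1, Mom_1, h1, h2, S.first t]
  refine ⟨m0, m1, ?_⟩
  have h1 := D.int t (g := fun x => 1 + x ^ 2) (by fun_prop) (fun x _ => by positivity)
  have h2 : Mom 0 (c t) + Mom 2 (c t) = (∫⁻ x, ENNReal.ofReal (1 + x ^ 2) ∂(m t)).toReal := by
    rw [Mom_02 hY, ← h1]; rfl
  have pos1 : 0 < M⁻¹ - 2 * Φ * t := by rw [← hΦT]; nlinarith
  have pos2 : M⁻¹ - 2 * Φ * t ≤ M⁻¹ - 2 * P2 * t := by rw [hΦ]; nlinarith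
  have h3 := ENNReal.toReal_mono ENNReal.ofReal_ne_top (S.mom t ht htT'.le)
  rw [ENNReal.toReal_ofReal (by have := pos1.trans_le pos2; positivity), one_div] at h3
  have h4 : (∫⁻ x, ENNReal.ofReal (1 + x ^ 2) ∂(m t)).toReal ≤ (M⁻¹ - 2 * P2 * t)⁻¹ := h3
  have h5 := inv_anti₀ pos1 pos2
  linarith

end CG

/-- Finite-time existence for kernels of quadratic growth. -/
theorem cgedg_finite_time_existence
    (K : ℝ → ℝ → ℝ → ℝ) (φ : ℝ → ℝ) (hK : IsKernel K)
    (hφ : MemYplus 0 2 φ)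
    (hbound : ∀ x y z : ℝ, 0 ≤ x → 0 ≤ y → 0 ≤ z →
      K x y z ≤ checkm x ^ (2:ℝ) * checkm y ^ (2:ℝ) * φ z)
    (hderiv : SecondDerivBound K 0 2 φ)
    (c₀ : ℝ → ℝ) (hc₀ : MemYplus 0 2 c₀)
    (hc₀ne : ¬ c₀ =ᵐ[volume.restrict (Ioi (0:ℝ))] 0) :
    ∃ c : ℝ → ℝ → ℝ,
      IsWeakSolution K 0 2
        (ENNReal.ofReal ((2 * phiNorm 2 φ * (Mom 0 c₀ + Mom 2 c₀))⁻¹)) c₀ c ∧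
      ∀ t : ℝ, 0 ≤ t →
        ENNReal.ofReal t <
          ENNReal.ofReal ((2 * phiNorm 2 φ * (Mom 0 c₀ + Mom 2 c₀))⁻¹) →
        Mom 0 (c t) = Mom 0 c₀ ∧ Mom 1 (c t) = Mom 1 c₀ ∧
        Mom 2 (c t) ≤ ((Mom 0 c₀ + Mom 2 c₀)⁻¹ - 2 * phiNorm 2 φ * t)⁻¹ - Mom 0 c₀ := by
  exact CG.final K φ hK hφ hbound hderiv c₀ hc₀ hc₀ne
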